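/- Let d ≥ 3 and let 𝔢 be a dispersion relation of class C³ whose critical points are all nondegenerate. For all constants K > 0 and C < ∞ with K(𝔢) ≥ K and ‖𝔢‖_{C³} ≤ C, there exists a constant c < ∞ depending only on K and C such that for every potential V : Γ → ℝ, every function V^{1/2} : Γ → ℂ with (V^{1/2}(x))² = V(x) for all x, and every z ∈ ℂ∖ℝ, the operator T on ℓ²(Γ) with matrix elements ⟨δ_x, T δ_y⟩ = V^{1/2}(x)·⟨g_x, (z − h(𝔢))^{−1} g_y⟩·V^{1/2}(y) is bounded with operator norm ‖T‖ ≤ c·Φ_{2,3}(V). -/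

import Mathlib

open MeasureTheory Complex Real
open scoped ENNReal

noncomputable section

namespace LatSch

/-- The lattice `Γ = ℤ^d`. -/
abbrev Γd (d : ℕ) := Fin d → ℤ

/-- The Hilbert space `ℓ²(Γ)`. -/
abbrev L2 (d : ℕ) := lp (fun _ : Γd d => ℂ) 2

/-- Euclidean norm of a lattice point. -/
def lnorm {d : ℕ} (x : Γd d) : ℝ := Real.sqrt (∑ i, ((x i : ℝ)) ^ 2)

/-- The standard basis vector `δ_x` of `ℓ²(Γ)`. -/
def delta {d : ℕ} (x : Γd d) : L2 d := lp.single 2 x 1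

local notation "⟪" a ", " b "⟫" => @inner ℂ _ _ a b

/-- The cube `[-π, π]^d`, a fundamental domain of the torus. -/
def torusBox (d : ℕ) : Set (Fin d → ℝ) := Set.univ.pi fun _ => Set.Icc (-π) π

/-- `⟨p, m⟩` for `p ∈ ℝ^d`, `m ∈ ℤ^d`. -/
def dotZ {d : ℕ} (p : Fin d → ℝ) (m : Γd d) : ℝ := ∑ i, p i * (m i : ℝ)

/-- Fourier coefficient `f̂(m) = (2π)^{-d} ∫_{[-π,π]^d} f(p) e^{i⟨p,m⟩} dp`. -/
def fCoeff {d : ℕ} (f : (Fin d → ℝ) → ℝ) (m : Γd d) : ℂ :=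
  ((1 / (2 * π) ^ d : ℝ) : ℂ) *
    ∫ p in torusBox d, (f p : ℂ) * Complex.exp (Complex.I * (dotZ p m : ℝ))

/-- `H` is the Fourier multiplier (hopping matrix) `h(f)`, characterized by its
matrix elements `⟨δ_x, H δ_y⟩ = f̂(x - y)`. -/
def IsMultiplier {d : ℕ} (f : (Fin d → ℝ) → ℝ) (H : L2 d →L[ℂ] L2 d) : Prop :=
  ∀ x y : Γd d, ⟪delta x, H (delta y)⟫ = fCoeff f (x - y)

/-- `M` is the operator of multiplication by the potential `V`. -/
def IsMulOp {d : ℕ} (V : Γd d → ℝ) (M : L2 d →L[ℂ] L2 d) : Prop :=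
  ∀ (ψ : L2 d) (x : Γd d), (M ψ : ∀ _ : Γd d, ℂ) x = (V x : ℂ) * (ψ : ∀ _ : Γd d, ℂ) x

/-- Partial derivative `∂_{p_k} f (p)`. -/
def pd {d : ℕ} (f : (Fin d → ℝ) → ℝ) (k : Fin d) (p : Fin d → ℝ) : ℝ :=
  fderiv ℝ f p (Pi.single k 1)

/-- `|∇f|²(p) = Σ_k (∂_{p_k} f(p))²`. -/
def gradSq {d : ℕ} (f : (Fin d → ℝ) → ℝ) (p : Fin d → ℝ) : ℝ := ∑ k, pd f k p ^ 2

/-- The Hessian matrix of `f` at `p`. -/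
def hess {d : ℕ} (f : (Fin d → ℝ) → ℝ) (p : Fin d → ℝ) : Matrix (Fin d) (Fin d) ℝ :=
  Matrix.of fun i j => fderiv ℝ (fun q => fderiv ℝ f q (Pi.single j 1)) p (Pi.single i 1)

/-- All critical points of `f` are nondegenerate (`f` is a Morse function). -/
def IsMorse {d : ℕ} (f : (Fin d → ℝ) → ℝ) : Prop :=
  ∀ p, fderiv ℝ f p = 0 → (hess f p).det ≠ 0

/-- `2πℤ^d`-periodicity. -/
def Periodic2pi {d : ℕ} (f : (Fin d → ℝ) → ℝ) : Prop :=
  ∀ (p : Fin d → ℝ) (m : Γd d), f (p + fun i => 2 * π * (m i : ℝ)) = f p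

/-- A dispersion relation: a `2πℤ^d`-periodic function with minimum `0`. -/
def IsDispersion {d : ℕ} (f : (Fin d → ℝ) → ℝ) : Prop :=
  Periodic2pi f ∧ (∀ p, 0 ≤ f p) ∧ (∃ p, f p = 0)

/-- Condition (M): `𝔢` and `|∇𝔢|²` are Morse functions. -/
def CondM {d : ℕ} (f : (Fin d → ℝ) → ℝ) : Prop := IsMorse f ∧ IsMorse (gradSq f)

/-- `Φ_{m,n}(V) = (Σ_x |V(x)|^{1/m} (1+|x|)^n)^m`, valued in `[0,∞]`. -/
def Phi {d : ℕ} (m n : ℕ) (V : Γd d → ℝ) : ℝ≥0∞ :=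
  (∑' x : Γd d, ENNReal.ofReal (|V x| ^ ((1 : ℝ) / m) * (1 + lnorm x) ^ n)) ^ m

/-- The set of eigenvectors of `H` (with real eigenvalue). -/
def eigvecs {d : ℕ} (H : L2 d →L[ℂ] L2 d) : Set (L2 d) :=
  {ψ : L2 d | ψ ≠ 0 ∧ ∃ μ : ℝ, H ψ = (μ : ℂ) • ψ}

/-- `N_pp[H]`: the Hilbert-space dimension of the closed linear span of all
eigenvectors of `H`. -/
def Npp {d : ℕ} (H : L2 d →L[ℂ] L2 d) : Cardinal :=
  Module.rank ℂ ((Submodule.span ℂ (eigvecs H)).topologicalClosure)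

/-- The Fourier transform `ĝ_x(p) = (i/2·|∇𝔢(p)|² + ⟨∇𝔢(p), x⟩) e^{-i⟨p,x⟩}`. -/
def ghat {d : ℕ} (e : (Fin d → ℝ) → ℝ) (x : Γd d) (p : Fin d → ℝ) : ℂ :=
  ((Complex.I / 2) * ((gradSq e p : ℝ) : ℂ) + ((∑ k, pd e k p * (x k : ℝ) : ℝ) : ℂ)) *
    Complex.exp (-(Complex.I * (dotZ p x : ℝ)))

/-- `g : Γ → ℓ²(Γ)` is the family of vectors `g_x` with Fourier transform `ĝ_x`. -/
def IsGVec {d : ℕ} (e : (Fin d → ℝ) → ℝ) (g : Γd d → L2 d) : Prop :=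
  ∀ x m : Γd d,
    (g x : ∀ _ : Γd d, ℂ) m =
      ((1 / (2 * π) ^ d : ℝ) : ℂ) *
        ∫ p in torusBox d, ghat e x p * Complex.exp (Complex.I * (dotZ p m : ℝ))

/-- `C` is the bounded self-adjoint realization
`C_V = Σ_x i V(x) (|δ_x⟩⟨g_x| - |g_x⟩⟨δ_x|)` of the commutator `i[V, A(𝔢)]`. -/
def IsCommOp {d : ℕ} (V : Γd d → ℝ) (g : Γd d → L2 d) (C : L2 d →L[ℂ] L2 d) : Prop :=
  ∀ ψ : L2 d,
    HasSum (fun x : Γd d =>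
      (Complex.I * (V x : ℂ)) • (⟪g x, ψ⟫ • delta x - ⟪delta x, ψ⟫ • g x)) (C ψ)

/-- `R` is the resolvent `(z - H)^{-1}`. -/
def IsResolventAt {d : ℕ} (H : L2 d →L[ℂ] L2 d) (z : ℂ) (R : L2 d →L[ℂ] L2 d) : Prop :=
  R.comp (z • (1 : L2 d →L[ℂ] L2 d) - H) = 1 ∧ (z • (1 : L2 d →L[ℂ] L2 d) - H).comp R = 1

/-- `‖f‖_{C^m} ≤ C`: all partial derivatives of order `≤ m` are bounded by `C`. -/
def CmNormLe {d : ℕ} (m : ℕ) (f : (Fin d → ℝ) → ℝ) (C : ℝ) : Prop :=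
  ∀ j : ℕ, j ≤ m → ∀ (p : Fin d → ℝ) (k : Fin j → Fin d),
    |iteratedFDeriv ℝ j f p (fun i => Pi.single (k i) 1)| ≤ C

/-- `K(𝔢) ≥ K`: at every critical point, every eigenvalue `λ` of the Hessian
satisfies `|λ|^{1/2} ≥ K`. -/
def MinCurvGe {d : ℕ} (f : (Fin d → ℝ) → ℝ) (K : ℝ) : Prop :=
  ∀ p, fderiv ℝ f p = 0 → ∀ (lam : ℝ) (v : Fin d → ℝ), v ≠ 0 →
    (hess f p).mulVec v = lam • v → K ^ 2 ≤ |lam|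

/-- The set of thresholds `Thr(𝔢) = 𝔢(Crit(𝔢))`. -/
def Thr {d : ℕ} (f : (Fin d → ℝ) → ℝ) : Set ℝ := f '' {p | fderiv ℝ f p = 0}


/-- The number of strictly negative eigenvalues of `C`, counted with multiplicity:
the dimension of the span of eigenvectors with strictly negative eigenvalue. -/
def NegCount {d : ℕ} (C : L2 d →L[ℂ] L2 d) : Cardinal :=
  Module.rank ℂ (Submodule.span ℂ
    {ψ : L2 d | ψ ≠ 0 ∧ ∃ μ : ℝ, μ < 0 ∧ C ψ = (μ : ℂ) • ψ})

/-- The number of strictly positive eigenvalues of `C`, counted with multiplicity. -/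
def PosCount {d : ℕ} (C : L2 d →L[ℂ] L2 d) : Cardinal :=
  Module.rank ℂ (Submodule.span ℂ
    {ψ : L2 d | ψ ≠ 0 ∧ ∃ μ : ℝ, 0 < μ ∧ C ψ = (μ : ℂ) • ψ})

/-!
Since `ĝ_x` is a combination of the `∂_k𝔢`, the matrix element `⟨g_x, (z - h(𝔢))⁻¹ g_y⟩` is a sum of
torus integrals of `∂_j𝔢 ∂_k𝔢 H / (z - 𝔢)` with `H` of class `C²`. Integrating by parts in `p_j`,
through `∂_j log(z - 𝔢) = -∂_j𝔢 / (z - 𝔢)`, leaves `log(z - 𝔢)` against terms that still carry a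
factor `∂_k𝔢` or `∂_j∂_k𝔢`. Such a factor makes the logarithm integrable uniformly in `z`, whether
or not the critical points are degenerate. In one variable, let `ρ = f'` or `f''` and `M` bound
`ρ'`. On the segment `{t + s ρ(t) / (2M) : 0 ≤ s ≤ 1}` the function `ρ` is comparable with `ρ(t)`,
so the sublevel sets of `s ↦ |z - f|` on it are small, with a loss of only `|log |ρ(t)||`, which the
factor `|ρ(t)|` absorbs; averaging over these segments gives the bound on an interval. Finally an
operator norm is at most the sum of the moduli of the matrix elements.
-/

section LowerBounds

variable {u u' u'' ω : ℝ → ℝ} {κ α β : ℝ}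

lemma exists_forall_le_of_le_sub (hαβ : α ≤ β) (hu : ContinuousOn u (Set.Icc α β))
    (hω : ∀ x ∈ Set.Icc α β, ∀ y ∈ Set.Icc α β, x ≤ y → ω (y - x) ≤ u y - u x) :
    ∃ a ∈ Set.Icc α β, (∀ s ∈ Set.Icc α β, a < s → ω (s - a) ≤ u s) ∧
      ∀ s ∈ Set.Icc α β, s < a → ω (a - s) ≤ -u s := by
  have hα : α ∈ Set.Icc α β := Set.left_mem_Icc.2 hαβ
  have hβ : β ∈ Set.Icc α β := Set.right_mem_Icc.2 hαβ
  rcases le_total 0 (u α) with hpos | hα0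
  · exact ⟨α, hα, fun s hs has => by linarith [hω α hα s hs has.le],
      fun s hs hsa => absurd hs.1 hsa.not_ge⟩
  rcases le_total (u β) 0 with hneg | hβ0
  · exact ⟨β, hβ, fun s hs has => absurd hs.2 has.not_ge,
      fun s hs hsa => by linarith [hω s hs β hβ hsa.le]⟩
  obtain ⟨a, ha, hua⟩ := intermediate_value_Icc hαβ hu ⟨hα0, hβ0⟩
  exact ⟨a, ha, fun s hs has => by linarith [hω a ha s hs has.le],
    fun s hs hsa => by linarith [hω s hs a ha hsa.le]⟩

lemma exists_forall_le_abs_of_le_sub (hαβ : α ≤ β) (hu : ContinuousOn u (Set.Icc α β))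
    (hω : ∀ x ∈ Set.Icc α β, ∀ y ∈ Set.Icc α β, x ≤ y → ω (y - x) ≤ u y - u x) :
    ∃ a ∈ Set.Icc α β, ∀ s ∈ Set.Icc α β, ω |s - a| ≤ |u s| := by
  obtain ⟨a, ha, hright, hleft⟩ := exists_forall_le_of_le_sub hαβ hu hω
  refine ⟨a, ha, fun s hs => ?_⟩
  rcases lt_trichotomy s a with hsa | rfl | has
  · rw [abs_sub_comm, abs_of_pos (sub_pos.2 hsa)]
    exact (hleft s hs hsa).trans (neg_le_abs _)
  · simpa using (hω s hs s hs le_rfl).trans ((sub_self _).trans_le (abs_nonneg (u s)))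
  · rw [abs_of_pos (sub_pos.2 has)]
    exact (hright s hs has).trans (le_abs_self _)

lemma mul_sub_le_sub_of_le_deriv (hu : ∀ t, HasDerivAt u (u' t) t)
    (hκ : ∀ t ∈ Set.Icc α β, κ ≤ u' t) :
    ∀ x ∈ Set.Icc α β, ∀ y ∈ Set.Icc α β, x ≤ y → κ * (y - x) ≤ u y - u x :=
  (convex_Icc α β).mul_sub_le_image_sub_of_le_deriv
    (fun t _ => (hu t).continuousAt.continuousWithinAt)
    (fun t _ => (hu t).differentiableAt.differentiableWithinAt)
    fun t ht => (hu t).deriv.symm ▸ hκ t (interior_subset ht)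

lemma exists_forall_mul_abs_le_abs_of_le_deriv (hαβ : α ≤ β) (hu : ∀ t, HasDerivAt u (u' t) t)
    (hκ : ∀ t ∈ Set.Icc α β, κ ≤ u' t) :
    ∃ a ∈ Set.Icc α β, ∀ s ∈ Set.Icc α β, κ * |s - a| ≤ |u s| :=
  exists_forall_le_abs_of_le_sub (ω := fun r => κ * r) hαβ
    (fun t _ => (hu t).continuousAt.continuousWithinAt) (mul_sub_le_sub_of_le_deriv hu hκ)

lemma half_mul_sq_le_sub_of_mul_sub_le_deriv {x y : ℝ} (hxy : x ≤ y)
    (hu : ∀ t, HasDerivAt u (u' t) t) (hκ : ∀ t ∈ Set.Ioo x y, κ * (t - x) ≤ u' t) :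
    κ / 2 * (y - x) ^ 2 ≤ u y - u x := by
  have hd (t : ℝ) :
      HasDerivAt (fun t => u t - κ / 2 * (t - x) ^ 2) (u' t - κ * (t - x)) t := by
    refine ((hu t).sub
      ((((hasDerivAt_id t).sub_const x).pow 2).const_mul (κ / 2))).congr_deriv ?_
    simp only [id, Nat.cast_ofNat]
    ring
  have hmono : MonotoneOn (fun t => u t - κ / 2 * (t - x) ^ 2) (Set.Icc x y) := by
    refine monotoneOn_of_deriv_nonneg (convex_Icc x y)
      (fun t _ => (hd t).continuousAt.continuousWithinAt)
      (fun t _ => (hd t).differentiableAt.differentiableWithinAt) fun t ht => ?_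
    rw [interior_Icc] at ht
    rw [(hd t).deriv]
    exact sub_nonneg.2 (hκ t ht)
  have := hmono (Set.left_mem_Icc.2 hxy) (Set.right_mem_Icc.2 hxy) hxy
  norm_num at this
  linarith

lemma half_mul_sq_le_sub_of_deriv_le_mul_sub {x y : ℝ} (hxy : x ≤ y)
    (hu : ∀ t, HasDerivAt u (u' t) t) (hκ : ∀ t ∈ Set.Ioo x y, u' t ≤ -(κ * (y - t))) :
    κ / 2 * (y - x) ^ 2 ≤ u x - u y := by
  have hd (t : ℝ) : HasDerivAt (fun t => u (-t)) (-u' (-t)) t := by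
    simpa [Function.comp_def] using (hu (-t)).comp t (hasDerivAt_neg t)
  have h := half_mul_sq_le_sub_of_mul_sub_le_deriv (κ := κ) (neg_le_neg hxy) hd fun t ht => by
    linarith [hκ (-t) ⟨by linarith [ht.2], by linarith [ht.1]⟩]
  simp only [neg_neg] at h
  linarith

/-- The derivative `u'` changes sign at one point `m`; on either side of `m` the function is
monotone, with increments growing quadratically. -/
lemma exists_forall_mul_sq_le_abs_of_le_deriv_deriv (hαβ : α ≤ β) (hκ0 : 0 ≤ κ)
    (hu : ∀ t, HasDerivAt u (u' t) t) (hu' : ∀ t, HasDerivAt u' (u'' t) t)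
    (hκ : ∀ t ∈ Set.Icc α β, κ ≤ u'' t) :
    ∃ a ∈ Set.Icc α β, ∃ b ∈ Set.Icc α β, ∀ s ∈ Set.Icc α β,
      κ / 2 * (s - a) ^ 2 ≤ |u s| ∨ κ / 2 * (s - b) ^ 2 ≤ |u s| := by
  obtain ⟨m, hm, hright, hleft⟩ := exists_forall_le_of_le_sub (ω := fun r => κ * r) hαβ
    (fun t _ => (hu' t).continuousAt.continuousWithinAt) (mul_sub_le_sub_of_le_deriv hu' hκ)
  have hc : Continuous u := continuous_iff_continuousAt.2 fun t => (hu t).continuousAt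
  obtain ⟨a, ha, hga⟩ := exists_forall_le_abs_of_le_sub (u := u) (ω := fun r => κ / 2 * r ^ 2)
    hm.2 hc.continuousOn fun x hx y hy hxy =>
      half_mul_sq_le_sub_of_mul_sub_le_deriv hxy hu fun t ht => by
        have htm : m < t := hx.1.trans_lt ht.1
        have := hright t ⟨hm.1.trans htm.le, ht.2.le.trans hy.2⟩ htm
        nlinarith [hx.1]
  obtain ⟨b, hb, hgb⟩ := exists_forall_le_abs_of_le_sub (u := fun t => -u t)
    (ω := fun r => κ / 2 * r ^ 2) hm.1 hc.neg.continuousOn fun x hx y hy hxy => by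
      have := half_mul_sq_le_sub_of_deriv_le_mul_sub (κ := κ) hxy hu fun t ht => by
        have htm : t < m := ht.2.trans_le hy.2
        have := hleft t ⟨hx.1.trans ht.1.le, htm.le.trans hm.2⟩ htm
        nlinarith [hy.2]
      linarith
  refine ⟨a, ⟨hm.1.trans ha.1, ha.2⟩, b, ⟨hb.1, hb.2.trans hm.2⟩, fun s hs => ?_⟩
  rcases le_total m s with hms | hsm
  · exact .inl (by simpa [sq_abs] using hga s ⟨hms, hs.2⟩)
  · exact .inr (by simpa [sq_abs] using hgb s ⟨hs.1, hsm⟩)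

end LowerBounds

section LogSingularity

variable {M B : ℝ}

lemma setLIntegral_enorm_log_ne_top :
    ∫⁻ s in Set.Icc (-1 : ℝ) 1, ‖Real.log s‖ₑ ≠ ⊤ :=
  ((intervalIntegrable_iff_integrableOn_Icc_of_le (by norm_num)).1
    intervalIntegral.intervalIntegrable_log').2.ne

lemma setLIntegral_enorm_log_sub_le {a : ℝ} (ha : a ∈ Set.Icc (0 : ℝ) 1) :
    ∫⁻ s in Set.Icc (0 : ℝ) 1, ‖Real.log (s - a)‖ₑ ≤
      ∫⁻ s in Set.Icc (-1 : ℝ) 1, ‖Real.log s‖ₑ := by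
  rw [← lintegral_indicator measurableSet_Icc, ← lintegral_indicator measurableSet_Icc,
    ← lintegral_sub_right_eq_self (Set.indicator (Set.Icc (-1 : ℝ) 1) _) a]
  refine lintegral_mono <| Set.indicator_le fun s hs => ?_
  rw [Set.indicator_of_mem]
  exact ⟨by linarith [hs.1, ha.2], by linarith [hs.2, ha.1]⟩

lemma norm_log_le {w : ℂ} {δ : ℝ} (hδ : 0 < δ) (hw : δ ≤ ‖w‖) (hB : ‖w‖ ≤ B) :
    ‖Complex.log w‖ ≤ π + B + |Real.log δ| := by
  have hlog : |Real.log ‖w‖| ≤ B + |Real.log δ| := by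
    have hw0 : 0 < ‖w‖ := hδ.trans_le hw
    rw [abs_le]
    constructor
    · linarith [Real.log_le_log hδ hw, neg_abs_le (Real.log δ)]
    · linarith [Real.log_le_self hw0.le, abs_nonneg (Real.log δ)]
  calc ‖Complex.log w‖ ≤ |(Complex.log w).re| + |(Complex.log w).im| :=
        Complex.norm_le_abs_re_add_abs_im _
    _ ≤ B + |Real.log δ| + π := by
        rw [Complex.log_re, Complex.log_im]
        exact add_le_add hlog (Complex.abs_arg_le_pi w)
    _ = π + B + |Real.log δ| := by ring

lemma mul_abs_log_cube_div_le {η : ℝ} (hη : 0 < η) (hηM : η ≤ M) :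
    η * |Real.log (η ^ 3 / (16 * M ^ 2))| ≤ M * (3 + |Real.log (M / 16)|) := by
  have hM : 0 < M := hη.trans_le hηM
  have hsplit : Real.log (η ^ 3 / (16 * M ^ 2)) = 3 * Real.log (η / M) + Real.log (M / 16) := by
    rw [show η ^ 3 / (16 * M ^ 2) = (η / M) ^ 3 * (M / 16) by field_simp,
      Real.log_mul (by positivity) (by positivity), Real.log_pow]
    norm_num
  have hsmall : η * |Real.log (η / M)| ≤ M := by
    have h := (Real.abs_log_mul_self_lt (η / M) (by positivity) ((div_le_one hM).2 hηM)).le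
    rw [abs_mul, abs_of_pos (div_pos hη hM), mul_div_assoc', div_le_one hM] at h
    linarith
  calc η * |Real.log (η ^ 3 / (16 * M ^ 2))|
      ≤ η * (3 * |Real.log (η / M)| + |Real.log (M / 16)|) := by
        rw [hsplit]
        gcongr
        exact (abs_add_le _ _).trans_eq (by rw [abs_mul, abs_of_pos three_pos])
    _ = 3 * (η * |Real.log (η / M)|) + η * |Real.log (M / 16)| := by ring
    _ ≤ 3 * M + M * |Real.log (M / 16)| := by gcongr
    _ = M * (3 + |Real.log (M / 16)|) := by ring

lemma mul_norm_log_le {w : ℂ} {q η a s : ℝ} (hη : 0 < η) (hηM : η ≤ M) (hq : |q| ≤ 2 * η)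
    (hB : ‖w‖ ≤ B) (hsa : s ≠ a) (hw : η ^ 3 / (16 * M ^ 2) * (s - a) ^ 2 ≤ |w.re|) :
    |q| * ‖Complex.log w‖ ≤
      2 * M * (π + B + 3 + |Real.log (M / 16)|) + 4 * M * |Real.log (s - a)| := by
  have hM : 0 < M := hη.trans_le hηM
  have hB0 : 0 ≤ B := (norm_nonneg w).trans hB
  have hlog := norm_log_le (by positivity) (hw.trans (Complex.abs_re_le_norm w)) hB
  rw [Real.log_mul (by positivity) (by positivity), Real.log_pow] at hlog
  have hsum : ‖Complex.log w‖ ≤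
      π + B + (|Real.log (η ^ 3 / (16 * M ^ 2))| + 2 * |Real.log (s - a)|) := by
    refine hlog.trans (add_le_add_right ((abs_add_le _ _).trans_eq ?_) _)
    rw [abs_mul]
    norm_num
  calc |q| * ‖Complex.log w‖
      ≤ 2 * η * (π + B + (|Real.log (η ^ 3 / (16 * M ^ 2))| + 2 * |Real.log (s - a)|)) := by
        gcongr
    _ = 2 * η * (π + B) + 2 * (η * |Real.log (η ^ 3 / (16 * M ^ 2))|)
          + 4 * η * |Real.log (s - a)| := by ring
    _ ≤ 2 * M * (π + B) + 2 * (M * (3 + |Real.log (M / 16)|))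
          + 4 * M * |Real.log (s - a)| := by
        gcongr ?_ + 2 * ?_ + ?_
        · gcongr
        · exact mul_abs_log_cube_div_le hη hηM
        · gcongr
    _ = _ := by ring

lemma enorm_mul_enorm_log_le {w : ℂ} {q η a b s : ℝ} (hη : 0 < η) (hηM : η ≤ M)
    (hq : |q| ≤ 2 * η) (hB : ‖w‖ ≤ B) (hsa : s ≠ a) (hsb : s ≠ b)
    (hw : η ^ 3 / (16 * M ^ 2) * (s - a) ^ 2 ≤ |w.re| ∨
      η ^ 3 / (16 * M ^ 2) * (s - b) ^ 2 ≤ |w.re|) :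
    ‖q‖ₑ * ‖Complex.log w‖ₑ ≤ ENNReal.ofReal (2 * M * (π + B + 3 + |Real.log (M / 16)|)) +
      ENNReal.ofReal (4 * M) * (‖Real.log (s - a)‖ₑ + ‖Real.log (s - b)‖ₑ) := by
  have hM : 0 < M := hη.trans_le hηM
  have hB0 : 0 ≤ B := (norm_nonneg _).trans hB
  simp only [← ofReal_norm]
  rw [← ENNReal.ofReal_mul (by positivity), ← ENNReal.ofReal_add (by positivity) (by positivity),
    ← ENNReal.ofReal_mul (by positivity), ← ENNReal.ofReal_add (by positivity) (by positivity)]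
  refine ENNReal.ofReal_le_ofReal ?_
  simp only [Real.norm_eq_abs]
  rcases hw with hw | hw
  · linarith [mul_norm_log_le hη hηM hq hB hsa hw,
      mul_nonneg hM.le (abs_nonneg (Real.log (s - b)))]
  · linarith [mul_norm_log_le hη hηM hq hB hsb hw,
      mul_nonneg hM.le (abs_nonneg (Real.log (s - a)))]

lemma exists_setLIntegral_enorm_mul_log_le (M B : ℝ) : ∃ c : ℝ≥0∞, c ≠ ⊤ ∧
    ∀ (q : ℝ → ℝ) (w : ℝ → ℂ) (η a b : ℝ), 0 < η → η ≤ M →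
      a ∈ Set.Icc (0 : ℝ) 1 → b ∈ Set.Icc (0 : ℝ) 1 →
      (∀ s ∈ Set.Icc (0 : ℝ) 1, |q s| ≤ 2 * η) → (∀ s ∈ Set.Icc (0 : ℝ) 1, ‖w s‖ ≤ B) →
      (∀ s ∈ Set.Icc (0 : ℝ) 1, η ^ 3 / (16 * M ^ 2) * (s - a) ^ 2 ≤ |(w s).re| ∨
        η ^ 3 / (16 * M ^ 2) * (s - b) ^ 2 ≤ |(w s).re|) →
      ∫⁻ s in Set.Icc (0 : ℝ) 1, ‖q s‖ₑ * ‖Complex.log (w s)‖ₑ ≤ c := by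
  set A := ENNReal.ofReal (2 * M * (π + B + 3 + |Real.log (M / 16)|))
  set L := ∫⁻ s in Set.Icc (-1 : ℝ) 1, ‖Real.log s‖ₑ
  refine ⟨A + ENNReal.ofReal (4 * M) * (L + L), by finiteness [setLIntegral_enorm_log_ne_top],
    fun q w η a b hη hηM ha hb hq hB hw => ?_⟩
  have hpt : ∀ᵐ s ∂volume.restrict (Set.Icc (0 : ℝ) 1), ‖q s‖ₑ * ‖Complex.log (w s)‖ₑ ≤
      A + ENNReal.ofReal (4 * M) * (‖Real.log (s - a)‖ₑ + ‖Real.log (s - b)‖ₑ) := by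
    filter_upwards [ae_restrict_of_ae (Measure.ae_ne volume a),
      ae_restrict_of_ae (Measure.ae_ne volume b), ae_restrict_mem measurableSet_Icc]
      with s hsa hsb hs
    exact enorm_mul_enorm_log_le hη hηM (hq s hs) (hB s hs) hsa hsb (hw s hs)
  calc ∫⁻ s in Set.Icc (0 : ℝ) 1, ‖q s‖ₑ * ‖Complex.log (w s)‖ₑ
      ≤ ∫⁻ s in Set.Icc (0 : ℝ) 1,
          A + ENNReal.ofReal (4 * M) * (‖Real.log (s - a)‖ₑ + ‖Real.log (s - b)‖ₑ) :=
        lintegral_mono_ae hpt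
    _ = A + ENNReal.ofReal (4 * M) * ((∫⁻ s in Set.Icc (0 : ℝ) 1, ‖Real.log (s - a)‖ₑ) +
          ∫⁻ s in Set.Icc (0 : ℝ) 1, ‖Real.log (s - b)‖ₑ) := by
        rw [lintegral_add_left measurable_const, lintegral_const_mul' _ _ ENNReal.ofReal_ne_top,
          lintegral_add_left (by fun_prop)]
        simp
    _ ≤ A + ENNReal.ofReal (4 * M) * (L + L) := by
        gcongr
        · exact setLIntegral_enorm_log_sub_le ha
        · exact setLIntegral_enorm_log_sub_le hb

end LogSingularity

section MovingAverage

variable {r r' ρ ρ' : ℝ → ℝ} {Φ : ℝ → ℝ≥0∞} {M : ℝ}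

lemma setLIntegral_le_two_mul_setLIntegral_add_mul (hr : ∀ t, HasDerivAt r (r' t) t)
    (hr1 : ∀ t, |r t| ≤ 1 / 2) (hr2 : ∀ t, |r' t| ≤ 1 / 2) (Φ : ℝ → ℝ≥0∞) {s : ℝ}
    (hs : s ∈ Set.Icc (0 : ℝ) 1) :
    ∫⁻ t in Set.Icc (0 : ℝ) 1, Φ t ≤ 2 * ∫⁻ t in Set.Icc (-1 : ℝ) 2, Φ (t + s * r t) := by
  set φ : ℝ → ℝ := fun t => t + s * r t
  have hφ (t : ℝ) : HasDerivAt φ (1 + s * r' t) t := (hasDerivAt_id t).add ((hr t).const_mul s)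
  have hle {x : ℝ} (hx : |x| ≤ 1 / 2) : |s * x| ≤ 1 / 2 := by
    rw [abs_mul, abs_of_nonneg hs.1]
    exact (mul_le_of_le_one_left (abs_nonneg x) hs.2).trans hx
  have hmono : StrictMono φ := strictMono_of_deriv_pos fun t => by
    rw [(hφ t).deriv]
    linarith [(abs_le.1 (hle (hr2 t))).1]
  have hφc : Continuous φ := continuous_iff_continuousAt.2 fun t => (hφ t).continuousAt
  have hsub : Set.Icc (0 : ℝ) 1 ⊆ φ '' Set.Icc (-1 : ℝ) 2 := by
    refine (Set.Icc_subset_Icc ?_ ?_).trans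
      (intermediate_value_Icc (by norm_num) hφc.continuousOn)
    · linarith [(abs_le.1 (hle (hr1 (-1)))).2]
    · linarith [(abs_le.1 (hle (hr1 2))).1]
  calc ∫⁻ t in Set.Icc (0 : ℝ) 1, Φ t
      ≤ ∫⁻ t in φ '' Set.Icc (-1 : ℝ) 2, Φ t := lintegral_mono_set hsub
    _ = ∫⁻ t in Set.Icc (-1 : ℝ) 2, ENNReal.ofReal |1 + s * r' t| * Φ (φ t) :=
        lintegral_image_eq_lintegral_abs_deriv_mul measurableSet_Icc
          (fun t _ => (hφ t).hasDerivWithinAt) hmono.injective.injOn Φ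
    _ ≤ ∫⁻ t in Set.Icc (-1 : ℝ) 2, 2 * Φ (φ t) := by
        gcongr with t
        rw [← ENNReal.ofReal_ofNat 2]
        refine ENNReal.ofReal_le_ofReal (abs_le.2 ?_)
        constructor <;> linarith [abs_le.1 (hle (hr2 t))]
    _ = 2 * ∫⁻ t in Set.Icc (-1 : ℝ) 2, Φ (t + s * r t) :=
        lintegral_const_mul' _ _ (by simp)

lemma setLIntegral_le_of_setLIntegral_add_mul_le (hr : ∀ t, HasDerivAt r (r' t) t)
    (hr1 : ∀ t, |r t| ≤ 1 / 2) (hr2 : ∀ t, |r' t| ≤ 1 / 2) (hΦ : Measurable Φ) {c : ℝ≥0∞}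
    (hc : ∀ t, ∫⁻ s in Set.Icc (0 : ℝ) 1, Φ (t + s * r t) ≤ c) :
    ∫⁻ t in Set.Icc (0 : ℝ) 1, Φ t ≤ 6 * c := by
  have hrm : Measurable r :=
    (continuous_iff_continuousAt.2 fun t => (hr t).continuousAt).measurable
  calc ∫⁻ t in Set.Icc (0 : ℝ) 1, Φ t
      = ∫⁻ _ in Set.Icc (0 : ℝ) 1, ∫⁻ t in Set.Icc (0 : ℝ) 1, Φ t := by simp
    _ ≤ ∫⁻ s in Set.Icc (0 : ℝ) 1, 2 * ∫⁻ t in Set.Icc (-1 : ℝ) 2, Φ (t + s * r t) :=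
        setLIntegral_mono' measurableSet_Icc fun _ hs =>
          setLIntegral_le_two_mul_setLIntegral_add_mul hr hr1 hr2 Φ hs
    _ = 2 * ∫⁻ t in Set.Icc (-1 : ℝ) 2, ∫⁻ s in Set.Icc (0 : ℝ) 1, Φ (t + s * r t) := by
        rw [lintegral_const_mul' _ _ (by simp), lintegral_lintegral_swap]
        exact (hΦ.comp (by fun_prop)).aemeasurable
    _ ≤ 2 * ∫⁻ _ in Set.Icc (-1 : ℝ) 2, c := by gcongr with t; exact hc t
    _ = 6 * c := by
        rw [setLIntegral_const, Real.volume_Icc, mul_left_comm]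
        norm_num [mul_comm]

lemma abs_sub_le_half_of_abs_deriv_le (hM : 0 < M) (hρ : ∀ t, HasDerivAt ρ (ρ' t) t)
    (hρ' : ∀ t, |ρ' t| ≤ M) (t : ℝ) {s : ℝ} (hs : s ∈ Set.Icc (0 : ℝ) 1) :
    |ρ (t + s * (ρ t / (2 * M))) - ρ t| ≤ |ρ t| / 2 := by
  have h := convex_univ.norm_image_sub_le_of_norm_hasDerivWithin_le
    (fun x _ => (hρ x).hasDerivWithinAt) (fun x _ => hρ' x) (Set.mem_univ t)
    (Set.mem_univ (t + s * (ρ t / (2 * M))))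
  calc |ρ (t + s * (ρ t / (2 * M))) - ρ t|
      ≤ M * |t + s * (ρ t / (2 * M)) - t| := h
    _ = s * (|ρ t| / 2) := by
        rw [add_sub_cancel_left, abs_mul, abs_div, abs_of_nonneg hs.1,
          abs_of_pos (by positivity : 0 < 2 * M)]
        field_simp
    _ ≤ |ρ t| / 2 := mul_le_of_le_one_left (by positivity) hs.2

/-- Averaging over the segments `t + s ρ(t)/(2M)`, `0 ≤ s ≤ 1`, on which `ρ` is comparable with
`ρ(t)`, reduces the integral to a lower bound for `Re F` on each single segment. -/
lemma exists_setLIntegral_enorm_mul_log_le_of_local (hM : 0 < M) (B : ℝ) : ∃ c : ℝ≥0∞, c ≠ ⊤ ∧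
    ∀ (F : ℝ → ℂ) (ρ ρ' : ℝ → ℝ), Measurable F → (∀ t, ‖F t‖ ≤ B) →
      (∀ t, HasDerivAt ρ (ρ' t) t) → (∀ t, |ρ t| ≤ M) → (∀ t, |ρ' t| ≤ M) →
      (∀ t, ∃ a ∈ Set.Icc (0 : ℝ) 1, ∃ b ∈ Set.Icc (0 : ℝ) 1,
        ∀ s ∈ Set.Icc (0 : ℝ) 1,
          |ρ t| ^ 3 / (16 * M ^ 2) * (s - a) ^ 2 ≤ |(F (t + s * (ρ t / (2 * M)))).re| ∨
          |ρ t| ^ 3 / (16 * M ^ 2) * (s - b) ^ 2 ≤ |(F (t + s * (ρ t / (2 * M)))).re|) →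
      ∫⁻ t in Set.Icc (0 : ℝ) 1, ‖ρ t‖ₑ * ‖Complex.log (F t)‖ₑ ≤ c := by
  obtain ⟨c, hc, hlocal⟩ := exists_setLIntegral_enorm_mul_log_le M B
  refine ⟨6 * c, by finiteness, fun F ρ ρ' hF hFB hρ hρM hρ'M hlow => ?_⟩
  have hρm : Measurable ρ :=
    (continuous_iff_continuousAt.2 fun t => (hρ t).continuousAt).measurable
  have hhalf {x : ℝ} (hx : |x| ≤ M) : |x / (2 * M)| ≤ 1 / 2 := by
    rw [abs_div, abs_of_pos (by positivity : 0 < 2 * M), div_le_iff₀ (by positivity)]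
    linarith
  refine setLIntegral_le_of_setLIntegral_add_mul_le (r := fun t => ρ t / (2 * M))
    (fun t => (hρ t).div_const (2 * M)) (fun t => hhalf (hρM t)) (fun t => hhalf (hρ'M t))
    (hρm.enorm.mul (Complex.measurable_log.comp hF).enorm) fun t => ?_
  by_cases h0 : ρ t = 0
  · simp [h0]
  obtain ⟨a, ha, b, hb, hab⟩ := hlow t
  refine hlocal (fun s => ρ (t + s * (ρ t / (2 * M)))) (fun s => F (t + s * (ρ t / (2 * M)))) |ρ t|
    a b (abs_pos.2 h0) (hρM t) ha hb (fun s hs => ?_) (fun s _ => hFB _) hab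
  linarith [abs_sub_le_half_of_abs_deriv_le hM hρ hρ'M t hs,
    abs_sub_abs_le_abs_sub (ρ (t + s * (ρ t / (2 * M)))) (ρ t), abs_nonneg (ρ t)]

end MovingAverage

section OneDimensional

variable {M : ℝ}

lemma hasDerivAt_comp_add_mul {f f' : ℝ → ℝ} (hf : ∀ t, HasDerivAt f (f' t) t) (t r s : ℝ) :
    HasDerivAt (fun s => f (t + s * r)) (f' (t + s * r) * r) s :=
  (hf (t + s * r)).comp s (by simpa using ((hasDerivAt_id s).mul_const r).const_add t)

lemma half_sq_le_mul_of_abs_sub_le {x y : ℝ} (h : |x - y| ≤ |y| / 2) : y ^ 2 / 2 ≤ x * y := by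
  have hdiff : |(x - y) * y| ≤ y ^ 2 / 2 := by
    calc |(x - y) * y| ≤ |y| / 2 * |y| := by rw [abs_mul]; gcongr
      _ = y ^ 2 / 2 := by rw [← sq_abs y]; ring
  linarith [(abs_le.1 hdiff).1, sub_mul x y y]

lemma exists_setLIntegral_enorm_deriv_mul_log_le (hM : 0 < M) (B : ℝ) : ∃ c : ℝ≥0∞, c ≠ ⊤ ∧
    ∀ (f f' f'' : ℝ → ℝ) (z : ℂ), (∀ t, HasDerivAt f (f' t) t) →
      (∀ t, HasDerivAt f' (f'' t) t) → (∀ t, |f' t| ≤ M) → (∀ t, |f'' t| ≤ M) →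
      (∀ t, ‖z - f t‖ ≤ B) →
      ∫⁻ t in Set.Icc (0 : ℝ) 1, ‖f' t‖ₑ * ‖Complex.log (z - f t)‖ₑ ≤ c := by
  obtain ⟨c, hc, hlog⟩ := exists_setLIntegral_enorm_mul_log_le_of_local hM B
  refine ⟨c, hc, fun f f' f'' z hf hf' hM' hM'' hB => ?_⟩
  have hfc : Continuous f := continuous_iff_continuousAt.2 fun t => (hf t).continuousAt
  refine hlog (fun t => z - f t) f' f'' (by fun_prop) hB hf' hM' hM'' fun t => ?_
  set r := f' t / (2 * M) with hr
  have hlow : ∀ s ∈ Set.Icc (0 : ℝ) 1, |f' t| ^ 3 / (16 * M ^ 2) ≤ f' (t + s * r) * r := by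
    intro s hs
    have hsq := half_sq_le_mul_of_abs_sub_le
      (abs_sub_le_half_of_abs_deriv_le hM hf' hM'' t hs)
    calc |f' t| ^ 3 / (16 * M ^ 2) = |f' t| * f' t ^ 2 / (16 * M ^ 2) := by
          rw [← sq_abs (f' t)]; ring
      _ ≤ M * f' t ^ 2 / (16 * M ^ 2) := by gcongr; exact hM' t
      _ = f' t ^ 2 / 2 / (8 * M) := by field_simp; ring
      _ ≤ f' t ^ 2 / 2 / (2 * M) := by gcongr; norm_num
      _ ≤ f' (t + s * r) * f' t / (2 * M) := by gcongr
      _ = f' (t + s * r) * r := by rw [hr]; ring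
  obtain ⟨a, ha, hla⟩ := exists_forall_mul_abs_le_abs_of_le_deriv zero_le_one
    (fun s => (hasDerivAt_comp_add_mul hf t r s).sub_const z.re) hlow
  refine ⟨a, ha, a, ha, fun s hs => .inl ?_⟩
  calc |f' t| ^ 3 / (16 * M ^ 2) * (s - a) ^ 2
      ≤ |f' t| ^ 3 / (16 * M ^ 2) * |s - a| := by
        have h1 : |s - a| ≤ 1 := abs_le.2 ⟨by linarith [hs.1, ha.2], by linarith [hs.2, ha.1]⟩
        rw [← sq_abs (s - a)]
        gcongr
        exact pow_le_of_le_one (abs_nonneg _) h1 two_ne_zero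
    _ ≤ |f (t + s * r) - z.re| := hla s hs
    _ = |(z - f (t + s * r)).re| := by simp [abs_sub_comm]

lemma exists_setLIntegral_enorm_deriv_deriv_mul_log_le (hM : 0 < M) (B : ℝ) :
    ∃ c : ℝ≥0∞, c ≠ ⊤ ∧ ∀ (f f' f'' f''' : ℝ → ℝ) (z : ℂ), (∀ t, HasDerivAt f (f' t) t) →
      (∀ t, HasDerivAt f' (f'' t) t) → (∀ t, HasDerivAt f'' (f''' t) t) →
      (∀ t, |f'' t| ≤ M) → (∀ t, |f''' t| ≤ M) → (∀ t, ‖z - f t‖ ≤ B) →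
      ∫⁻ t in Set.Icc (0 : ℝ) 1, ‖f'' t‖ₑ * ‖Complex.log (z - f t)‖ₑ ≤ c := by
  obtain ⟨c, hc, hlog⟩ := exists_setLIntegral_enorm_mul_log_le_of_local hM B
  refine ⟨c, hc, fun f f' f'' f''' z hf hf' hf'' hM'' hM''' hB => ?_⟩
  have hfc : Continuous f := continuous_iff_continuousAt.2 fun t => (hf t).continuousAt
  refine hlog (fun t => z - f t) f'' f''' (by fun_prop) hB hf'' hM'' hM''' fun t => ?_
  set r := f'' t / (2 * M) with hr
  obtain ⟨σ, hσ1, hσf⟩ : ∃ σ : ℝ, |σ| = 1 ∧ σ * f'' t = |f'' t| := by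
    rcases abs_choice (f'' t) with h | h
    · exact ⟨1, by simp, by rw [one_mul, h]⟩
    · exact ⟨-1, by simp, by rw [neg_one_mul, h]⟩
  have hlow : ∀ s ∈ Set.Icc (0 : ℝ) 1,
      |f'' t| ^ 3 / (8 * M ^ 2) ≤ σ * (f'' (t + s * r) * r * r) := by
    intro s hs
    have hsq := half_sq_le_mul_of_abs_sub_le
      (abs_sub_le_half_of_abs_deriv_le hM hf'' hM''' t hs)
    calc |f'' t| ^ 3 / (8 * M ^ 2) = f'' t ^ 2 / 2 * (|f'' t| / (4 * M ^ 2)) := by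
          rw [← sq_abs (f'' t)]; ring
      _ ≤ f'' (t + s * r) * f'' t * (|f'' t| / (4 * M ^ 2)) := by gcongr
      _ = σ * (f'' (t + s * r) * r * r) := by rw [← hσf, hr]; ring
  obtain ⟨a, ha, b, hb, hab⟩ := exists_forall_mul_sq_le_abs_of_le_deriv_deriv zero_le_one
    (by positivity)
    (fun s => ((hasDerivAt_comp_add_mul hf t r s).sub_const z.re).const_mul σ)
    (fun s => ((hasDerivAt_comp_add_mul hf' t r s).mul_const r).const_mul σ) hlow
  refine ⟨a, ha, b, hb, fun s hs => ?_⟩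
  have hre : |σ * (f (t + s * r) - z.re)| = |(z - f (t + s * r)).re| := by
    simp [abs_mul, hσ1, abs_sub_comm]
  rw [← hre, show |f'' t| ^ 3 / (16 * M ^ 2) = |f'' t| ^ 3 / (8 * M ^ 2) / 2 by ring]
  exact hab s hs

end OneDimensional

section FiniteDimensional

variable {E : Type*} [NormedAddCommGroup E] [NormedSpace ℝ E]

lemma hasDerivAt_iteratedFDeriv_comp_add_smul {f : E → ℝ} {n : ℕ} (hf : ContDiff ℝ (n + 1) f)
    (p v : E) (t : ℝ) :
    HasDerivAt (fun t : ℝ => iteratedFDeriv ℝ n f (p + t • v) fun _ => v)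
      (iteratedFDeriv ℝ (n + 1) f (p + t • v) fun _ => v) t := by
  have hline : HasDerivAt (fun t : ℝ => p + t • v) v t := by
    simpa using ((hasDerivAt_id t).smul_const v).const_add p
  have hd := (hf.differentiable_iteratedFDeriv (m := n) (by exact_mod_cast n.lt_succ_self)
    (p + t • v)).hasFDerivAt.comp_hasDerivAt t hline
  exact ((ContinuousMultilinearMap.apply ℝ (fun _ : Fin n => E) ℝ
    fun _ => v).hasFDerivAt).comp_hasDerivAt t hd

lemma abs_iteratedFDeriv_const_le {f : E → ℝ} {n : ℕ} {p v : E} {M : ℝ}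
    (hM : ‖iteratedFDeriv ℝ n f p‖ ≤ M) (hv : ‖v‖ ≤ 1) :
    |iteratedFDeriv ℝ n f p fun _ => v| ≤ M := by
  refine ((iteratedFDeriv ℝ n f p).le_of_opNorm_le hM fun _ => v).trans ?_
  rw [Finset.prod_const]
  exact mul_le_of_le_one_right ((norm_nonneg _).trans hM) (pow_le_one₀ (norm_nonneg v) hv)

lemma polarization {F : Type*} [NormedAddCommGroup F] [NormedSpace ℝ F]
    {L : E →L[ℝ] E →L[ℝ] F} (hL : ∀ v w, L v w = L w v) (v w : E) :
    L v w = L ((1 / 2 : ℝ) • (v + w)) ((1 / 2 : ℝ) • (v + w)) -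
      L ((1 / 2 : ℝ) • (v - w)) ((1 / 2 : ℝ) • (v - w)) := by
  simp only [map_smul, map_add, map_sub, smul_apply,
    add_apply, sub_apply, hL w v]
  module

variable [FiniteDimensional ℝ E] [MeasurableSpace E] [BorelSpace E]
  (μ : Measure E) [μ.IsAddHaarMeasure]

lemma setLIntegral_closedBall_le_of_segment {Φ : E → ℝ≥0∞} (hΦ : Measurable Φ) {v : E}
    (hv : ‖v‖ ≤ 1) (r : ℝ) {c : ℝ≥0∞}
    (hc : ∀ p, ∫⁻ t in Set.Icc (0 : ℝ) 1, Φ (p + t • v) ≤ c) :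
    ∫⁻ p in Metric.closedBall 0 r, Φ p ∂μ ≤ c * μ (Metric.closedBall 0 (r + 1)) := by
  have hshift : ∀ t ∈ Set.Icc (0 : ℝ) 1, ∫⁻ p in Metric.closedBall 0 r, Φ p ∂μ ≤
      ∫⁻ p in Metric.closedBall 0 (r + 1), Φ (p + t • v) ∂μ := by
    intro t ht
    rw [← lintegral_indicator Metric.isClosed_closedBall.measurableSet,
      ← lintegral_indicator Metric.isClosed_closedBall.measurableSet,
      ← lintegral_sub_right_eq_self
        (Set.indicator (Metric.closedBall 0 (r + 1)) fun p => Φ (p + t • v)) (t • v)]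
    refine lintegral_mono <| Set.indicator_le fun p hp => ?_
    rw [mem_closedBall_zero_iff] at hp
    rw [Set.indicator_of_mem, sub_add_cancel]
    have htv : ‖t • v‖ ≤ 1 := by
      rw [norm_smul, norm_of_nonneg ht.1]
      exact mul_le_one₀ ht.2 (norm_nonneg v) hv
    exact mem_closedBall_zero_iff.2 ((norm_sub_le p (t • v)).trans (add_le_add hp htv))
  calc ∫⁻ p in Metric.closedBall 0 r, Φ p ∂μ
      = ∫⁻ _ in Set.Icc (0 : ℝ) 1, ∫⁻ p in Metric.closedBall 0 r, Φ p ∂μ := by simp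
    _ ≤ ∫⁻ t in Set.Icc (0 : ℝ) 1, ∫⁻ p in Metric.closedBall 0 (r + 1), Φ (p + t • v) ∂μ :=
        setLIntegral_mono' measurableSet_Icc hshift
    _ = ∫⁻ p in Metric.closedBall 0 (r + 1), (∫⁻ t in Set.Icc (0 : ℝ) 1, Φ (p + t • v)) ∂μ := by
        rw [lintegral_lintegral_swap]
        exact (hΦ.comp (by fun_prop)).aemeasurable
    _ ≤ ∫⁻ _ in Metric.closedBall 0 (r + 1), c ∂μ := lintegral_mono hc
    _ = c * μ (Metric.closedBall 0 (r + 1)) := setLIntegral_const _ _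

variable {M : ℝ}

lemma exists_setLIntegral_enorm_fderiv_mul_log_le (hM : 0 < M) (B r : ℝ) :
    ∃ c : ℝ≥0∞, c ≠ ⊤ ∧ ∀ (f : E → ℝ) (z : ℂ) (v : E), ContDiff ℝ 2 f →
      (∀ p, ‖iteratedFDeriv ℝ 1 f p‖ ≤ M) → (∀ p, ‖iteratedFDeriv ℝ 2 f p‖ ≤ M) →
      (∀ p, ‖z - f p‖ ≤ B) → ‖v‖ ≤ 1 →
      ∫⁻ p in Metric.closedBall 0 r, ‖fderiv ℝ f p v‖ₑ * ‖Complex.log (z - f p)‖ₑ ∂μ ≤ c := by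
  obtain ⟨c, hc, hline⟩ := exists_setLIntegral_enorm_deriv_mul_log_le hM B
  refine ⟨c * μ (Metric.closedBall 0 (r + 1)), ENNReal.mul_ne_top hc measure_closedBall_lt_top.ne,
    fun f z v hf hM₁ hM₂ hB hv => ?_⟩
  have hfc : Continuous f := hf.continuous
  refine setLIntegral_closedBall_le_of_segment μ (Φ := fun p =>
    ‖fderiv ℝ f p v‖ₑ * ‖Complex.log (z - f p)‖ₑ) ?_ hv r fun p => ?_
  · exact (measurable_fderiv_apply_const ℝ f v).enorm.mul
      (Complex.measurable_log.comp (by fun_prop)).enorm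
  · simp_rw [← iteratedFDeriv_one_apply fun _ => v]
    exact hline (fun t => f (p + t • v)) _ _ z
      (hasDerivAt_iteratedFDeriv_comp_add_smul (n := 0) (hf.of_le (by norm_num)) p v)
      (hasDerivAt_iteratedFDeriv_comp_add_smul (n := 1) hf p v)
      (fun t => abs_iteratedFDeriv_const_le (hM₁ _) hv)
      (fun t => abs_iteratedFDeriv_const_le (hM₂ _) hv) fun t => hB _

lemma exists_setLIntegral_enorm_iteratedFDeriv_two_mul_log_le (hM : 0 < M) (B r : ℝ) :
    ∃ c : ℝ≥0∞, c ≠ ⊤ ∧ ∀ (f : E → ℝ) (z : ℂ) (v : E), ContDiff ℝ 3 f →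
      (∀ p, ‖iteratedFDeriv ℝ 2 f p‖ ≤ M) → (∀ p, ‖iteratedFDeriv ℝ 3 f p‖ ≤ M) →
      (∀ p, ‖z - f p‖ ≤ B) → ‖v‖ ≤ 1 →
      ∫⁻ p in Metric.closedBall 0 r,
        ‖iteratedFDeriv ℝ 2 f p fun _ => v‖ₑ * ‖Complex.log (z - f p)‖ₑ ∂μ ≤ c := by
  obtain ⟨c, hc, hline⟩ := exists_setLIntegral_enorm_deriv_deriv_mul_log_le hM B
  refine ⟨c * μ (Metric.closedBall 0 (r + 1)), ENNReal.mul_ne_top hc measure_closedBall_lt_top.ne,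
    fun f z v hf hM₂ hM₃ hB hv => ?_⟩
  have hfc : Continuous f := hf.continuous
  have hD : Continuous fun p => iteratedFDeriv ℝ 2 f p fun _ => v :=
    (ContinuousMultilinearMap.apply ℝ (fun _ : Fin 2 => E) ℝ fun _ => v).continuous.comp
      (hf.continuous_iteratedFDeriv (by norm_num))
  refine setLIntegral_closedBall_le_of_segment μ (Φ := fun p =>
    ‖iteratedFDeriv ℝ 2 f p fun _ => v‖ₑ * ‖Complex.log (z - f p)‖ₑ)
    (hD.measurable.enorm.mul (Complex.measurable_log.comp (by fun_prop)).enorm) hv r fun p => ?_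
  exact hline (fun t => f (p + t • v)) _ _ _ z
    (hasDerivAt_iteratedFDeriv_comp_add_smul (n := 0) (hf.of_le (by norm_num)) p v)
    (hasDerivAt_iteratedFDeriv_comp_add_smul (n := 1) (hf.of_le (by norm_num)) p v)
    (hasDerivAt_iteratedFDeriv_comp_add_smul (n := 2) hf p v)
    (fun t => abs_iteratedFDeriv_const_le (hM₂ _) hv)
    (fun t => abs_iteratedFDeriv_const_le (hM₃ _) hv) fun t => hB _

lemma exists_setLIntegral_enorm_fderiv_fderiv_mul_log_le (hM : 0 < M) (B r : ℝ) :
    ∃ c : ℝ≥0∞, c ≠ ⊤ ∧ ∀ (f : E → ℝ) (z : ℂ) (v w : E), ContDiff ℝ 3 f →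
      (∀ p, ‖iteratedFDeriv ℝ 2 f p‖ ≤ M) → (∀ p, ‖iteratedFDeriv ℝ 3 f p‖ ≤ M) →
      (∀ p, ‖z - f p‖ ≤ B) → ‖v‖ ≤ 1 → ‖w‖ ≤ 1 →
      ∫⁻ p in Metric.closedBall 0 r,
        ‖fderiv ℝ (fderiv ℝ f) p v w‖ₑ * ‖Complex.log (z - f p)‖ₑ ∂μ ≤ c := by
  obtain ⟨c, hc, hdiag⟩ := exists_setLIntegral_enorm_iteratedFDeriv_two_mul_log_le μ hM B r
  refine ⟨c + c, by finiteness, fun f z v w hf hM₂ hM₃ hB hv hw => ?_⟩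
  simp only [iteratedFDeriv_two_apply] at hdiag
  have hmeas (u : E) : Measurable fun p =>
      ‖fderiv ℝ (fderiv ℝ f) p u u‖ₑ * ‖Complex.log (z - f p)‖ₑ := by
    have hfc : Continuous f := hf.continuous
    have hD : Continuous fun p => fderiv ℝ (fderiv ℝ f) p u u :=
      (((hf.fderiv_right (m := 2) (by norm_num)).continuous_fderiv two_ne_zero).clm_apply
        continuous_const).clm_apply continuous_const
    exact hD.measurable.enorm.mul (Complex.measurable_log.comp (by fun_prop)).enorm
  have hhalf {x : E} (hx : ‖x‖ ≤ ‖v‖ + ‖w‖) : ‖(1 / 2 : ℝ) • x‖ ≤ 1 := by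
    rw [norm_smul]
    norm_num
    linarith
  refine le_trans ?_ (add_le_add
    (hdiag f z _ hf hM₂ hM₃ hB (hhalf (norm_add_le v w)))
    (hdiag f z _ hf hM₂ hM₃ hB (hhalf (norm_sub_le v w))))
  rw [← lintegral_add_left (hmeas _)]
  gcongr with p
  have hsymm : ∀ x y, fderiv ℝ (fderiv ℝ f) p x y = fderiv ℝ (fderiv ℝ f) p y x :=
    (hf.contDiffAt.isSymmSndFDerivAt (by simp; norm_num)).eq
  rw [polarization hsymm v w, ← add_mul]
  gcongr
  exact enorm_sub_le

end FiniteDimensional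

open scoped ComplexConjugate Pointwise

section Box

variable {d : ℕ}

lemma torusBox_eq_closedBall (d : ℕ) : torusBox d = Metric.closedBall 0 π := by
  rw [closedBall_pi _ pi_nonneg, torusBox]
  simp only [Real.closedBall_eq_Icc, Pi.zero_apply, zero_sub, zero_add]

lemma torusBox_eq_Icc (d : ℕ) : torusBox d = Set.Icc (fun _ => -π) fun _ => π := by
  rw [torusBox, Set.pi_univ_Icc]

lemma isCompact_torusBox (d : ℕ) : IsCompact (torusBox d) :=
  isCompact_univ_pi fun _ => isCompact_Icc

lemma integrableOn_torusBox {F : (Fin d → ℝ) → ℂ} (hF : Continuous F) :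
    IntegrableOn F (torusBox d) :=
  hF.continuousOn.integrableOn_compact (isCompact_torusBox d)

@[fun_prop]
lemma continuous_dotZ (m : Γd d) : Continuous fun p => dotZ p m := by
  unfold dotZ
  fun_prop

lemma dotZ_sub (p : Fin d → ℝ) (m n : Γd d) : dotZ p (m - n) = dotZ p m - dotZ p n := by
  simp only [dotZ, Pi.sub_apply, Int.cast_sub, mul_sub, Finset.sum_sub_distrib]

/-- The mean `(2π)^{-d} ∫_{[-π,π]^d} F(p) dp` of a function on the torus. -/
def boxMean (F : (Fin d → ℝ) → ℂ) : ℂ :=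
  ((1 / (2 * π) ^ d : ℝ) : ℂ) * ∫ p in torusBox d, F p

lemma boxMean_add {F G : (Fin d → ℝ) → ℂ} (hF : Continuous F) (hG : Continuous G) :
    boxMean (fun p => F p + G p) = boxMean F + boxMean G := by
  simp only [boxMean, ← mul_add]
  rw [integral_add (integrableOn_torusBox hF) (integrableOn_torusBox hG)]

lemma boxMean_sum {ι : Type*} (s : Finset ι) {F : ι → (Fin d → ℝ) → ℂ}
    (hF : ∀ i, Continuous (F i)) : boxMean (fun p => ∑ i ∈ s, F i p) = ∑ i ∈ s, boxMean (F i) := by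
  simp only [boxMean, ← Finset.mul_sum]
  rw [integral_finsetSum s fun i _ => integrableOn_torusBox (hF i)]

lemma boxMean_const_mul (a : ℂ) (F : (Fin d → ℝ) → ℂ) :
    boxMean (fun p => a * F p) = a * boxMean F := by
  rw [boxMean, boxMean, integral_const_mul, mul_left_comm]

lemma conj_boxMean (F : (Fin d → ℝ) → ℂ) : conj (boxMean F) = boxMean fun p => conj (F p) := by
  rw [boxMean, boxMean, map_mul, Complex.conj_ofReal, integral_conj]

/-- The Fourier coefficient `(2π)^{-d} ∫_{[-π,π]^d} F(p) e^{i⟨p,m⟩} dp` of a complex function,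
with the sign convention of `fCoeff`. -/
def boxCoeff (F : (Fin d → ℝ) → ℂ) (m : Γd d) : ℂ :=
  boxMean fun p => F p * Complex.exp (Complex.I * (dotZ p m : ℝ))

lemma conj_exp_I_mul_dotZ (p : Fin d → ℝ) (m : Γd d) :
    conj (Complex.exp (Complex.I * (dotZ p m : ℝ))) =
      Complex.exp (-(Complex.I * (dotZ p m : ℝ))) := by
  rw [← Complex.exp_conj, map_mul, Complex.conj_I, Complex.conj_ofReal, neg_mul]

end Box

section Parseval

variable {d : ℕ}

local instance : MeasureSpace UnitAddCircle := ⟨AddCircle.haarAddCircle⟩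

local instance : Measure.IsAddHaarMeasure (volume : Measure UnitAddCircle) :=
  inferInstanceAs (Measure.IsAddHaarMeasure AddCircle.haarAddCircle)

local instance : IsProbabilityMeasure (volume : Measure UnitAddCircle) :=
  inferInstanceAs (IsProbabilityMeasure AddCircle.haarAddCircle)

/-- The point `-2πθ` of the box `[-π,π]^d`, for `θ ∈ (ℝ/ℤ)^d` represented in `(-1/2, 1/2]^d`. The
sign turns the characters `e^{-2πi⟨θ,m⟩}` of `UnitAddTorus.mFourierCoeff` into those of
`boxCoeff`. -/
def boxRep (θ : UnitAddTorus (Fin d)) : Fin d → ℝ :=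
  (-(2 * π)) • (UnitAddTorus.measurableEquivPiIoc (fun _ => -1 / 2) θ).1

lemma measurable_boxRep : Measurable (boxRep (d := d)) :=
  (measurable_subtype_coe.comp (UnitAddTorus.measurableEquivPiIoc _).measurable).const_smul
    (-(2 * π))

lemma boxRep_coe {x : Fin d → ℝ} (hx : ∀ i, x i ∈ Set.Ioc (-1 / 2 : ℝ) (-1 / 2 + 1)) :
    boxRep (fun i => (x i : UnitAddCircle)) = (-(2 * π)) • x :=
  congrArg (fun y => (-(2 * π)) • y.1)
    ((UnitAddTorus.measurableEquivPiIoc fun _ => -1 / 2).apply_symm_apply ⟨x, hx⟩)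

lemma boxRep_mem_torusBox (θ : UnitAddTorus (Fin d)) : boxRep θ ∈ torusBox d := by
  have hp := pi_pos
  intro i _
  obtain ⟨h₁, h₂⟩ := (UnitAddTorus.measurableEquivPiIoc (fun _ => -1 / 2) θ).2 i
  simp only [boxRep, Pi.smul_apply, smul_eq_mul, Set.mem_Icc]
  constructor <;> nlinarith

lemma integral_comp_boxRep (F : (Fin d → ℝ) → ℂ) :
    ∫ θ : UnitAddTorus (Fin d), F (boxRep θ) = boxMean F := by
  have hS : {x : Fin d → ℝ | ∀ i, x i ∈ Set.Ioc (-1 / 2 : ℝ) (-1 / 2 + 1)} =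
      Set.univ.pi fun _ => Set.Ioc (-1 / 2) (-1 / 2 + 1) := by
    ext
    simp
  have hball : (Set.univ.pi fun _ : Fin d => Set.Ioc (-1 / 2 : ℝ) (-1 / 2 + 1)) =ᵐ[volume]
      Metric.closedBall 0 (1 / 2) := by
    refine Measure.univ_pi_Ioc_ae_eq_Icc.trans (Filter.EventuallyEq.of_eq ?_)
    rw [closedBall_pi _ (by norm_num), ← Set.pi_univ_Icc]
    norm_num [Real.closedBall_eq_Icc]
    rfl
  rw [UnitAddTorus.integral_preimage _ fun _ => -1 / 2, hS, setIntegral_congr_fun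
    (MeasurableSet.univ_pi fun _ => measurableSet_Ioc) (g := fun x => F ((-(2 * π)) • x)),
    setIntegral_congr_set hball, Measure.setIntegral_comp_smul _ _ _ (by simp [pi_ne_zero]),
    smul_closedBall _ _ (by norm_num), smul_zero, boxMean, torusBox_eq_closedBall]
  · rw [norm_neg, norm_of_nonneg two_pi_pos.le, Module.finrank_fin_fun, real_smul]
    congr 3
    · rw [abs_inv, abs_pow, abs_neg, abs_of_pos two_pi_pos, one_div]
    · rw [mul_one_div, mul_div_cancel_left₀ _ two_ne_zero]
  · intro x hx
    exact congrArg F (boxRep_coe fun i => hx i (Set.mem_univ i))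

lemma mFourier_neg_eq_exp_boxRep (n : Γd d) (θ : UnitAddTorus (Fin d)) :
    UnitAddTorus.mFourier (-n) θ = Complex.exp (Complex.I * (dotZ (boxRep θ) n : ℝ)) := by
  obtain ⟨⟨x, hx⟩, rfl⟩ := (UnitAddTorus.measurableEquivPiIoc fun _ => -1 / 2).symm.surjective θ
  simp only [UnitAddTorus.coe_symm_measurableEquivPiIoc_apply, boxRep_coe hx,
    UnitAddTorus.mFourier, ContinuousMap.coe_mk, fourier_coe_apply, dotZ, Complex.ofReal_sum,
    Finset.mul_sum, Complex.exp_sum]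
  refine Finset.prod_congr rfl fun i _ => congrArg Complex.exp ?_
  push_cast [Pi.neg_apply, Pi.smul_apply, smul_eq_mul]
  ring

lemma memLp_comp_boxRep {F : (Fin d → ℝ) → ℂ} (hF : Continuous F) :
    MemLp (fun θ => F (boxRep θ)) 2 (volume : Measure (UnitAddTorus (Fin d))) := by
  obtain ⟨M, hM⟩ := (isCompact_torusBox d).exists_bound_of_continuousOn hF.continuousOn
  exact MemLp.of_bound (hF.measurable.comp measurable_boxRep).aestronglyMeasurable M <|
    .of_forall fun θ => hM _ (boxRep_mem_torusBox θ)

lemma mFourierCoeff_toLp_comp_boxRep {F : (Fin d → ℝ) → ℂ} (hF : Continuous F) (n : Γd d) :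
    UnitAddTorus.mFourierCoeff ((memLp_comp_boxRep hF).toLp _) n = boxCoeff F n := by
  rw [boxCoeff, ← integral_comp_boxRep, UnitAddTorus.mFourierCoeff]
  refine integral_congr_ae ?_
  filter_upwards [(memLp_comp_boxRep hF).coeFn_toLp] with θ hθ
  rw [hθ, mFourier_neg_eq_exp_boxRep, smul_eq_mul, mul_comm]

lemma hasSum_conj_boxCoeff_mul_boxCoeff {F G : (Fin d → ℝ) → ℂ} (hF : Continuous F)
    (hG : Continuous G) :
    HasSum (fun n => conj (boxCoeff F n) * boxCoeff G n) (boxMean fun p => conj (F p) * G p) := by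
  have h := UnitAddTorus.hasSum_prod_mFourierCoeff ((memLp_comp_boxRep hF).toLp _)
    ((memLp_comp_boxRep hG).toLp _)
  simp only [mFourierCoeff_toLp_comp_boxRep hF, mFourierCoeff_toLp_comp_boxRep hG] at h
  convert h using 1
  rw [← integral_comp_boxRep]
  refine integral_congr_ae ?_
  filter_upwards [(memLp_comp_boxRep hF).coeFn_toLp, (memLp_comp_boxRep hG).coeFn_toLp]
    with θ hFθ hGθ
  rw [hFθ, hGθ]

lemma memℓp_boxCoeff {F : (Fin d → ℝ) → ℂ} (hF : Continuous F) : Memℓp (boxCoeff F) 2 := by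
  refine memℓp_gen ?_
  convert (Complex.hasSum_re (hasSum_conj_boxCoeff_mul_boxCoeff hF hF)).summable using 2 with n
  rw [Complex.conj_mul', ← Complex.ofReal_pow, Complex.ofReal_re]
  norm_num

end Parseval

section Resolvent

variable {d : ℕ}

/-- The vector of `ℓ²(Γ)` with Fourier transform `F`, as a linear function of `F`. -/
def boxVec : C(Fin d → ℝ, ℂ) →ₗ[ℂ] L2 d where
  toFun F := ⟨boxCoeff F, memℓp_boxCoeff F.continuous⟩
  map_add' F G := by
    ext m
    simp only [lp.coeFn_add, Pi.add_apply, boxCoeff, ContinuousMap.add_apply, add_mul]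
    exact boxMean_add (by fun_prop) (by fun_prop)
  map_smul' a F := by
    ext m
    simp only [lp.coeFn_smul, Pi.smul_apply, boxCoeff, ContinuousMap.smul_apply, smul_eq_mul,
      mul_assoc, RingHom.id_apply]
    exact boxMean_const_mul a _

lemma boxVec_apply (F : C(Fin d → ℝ, ℂ)) (m : Γd d) : boxVec F m = boxCoeff F m := rfl

lemma inner_boxVec_boxVec (F G : C(Fin d → ℝ, ℂ)) :
    ⟪boxVec F, boxVec G⟫ = boxMean fun p => conj (F p) * G p := by
  refine (lp.hasSum_inner (𝕜 := ℂ) (boxVec F) (boxVec G)).unique ?_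
  simpa only [RCLike.inner_apply', boxVec_apply] using
    hasSum_conj_boxCoeff_mul_boxCoeff F.continuous G.continuous

lemma inner_delta_left (m : Γd d) (ψ : L2 d) : ⟪delta m, ψ⟫ = ψ m := by
  rw [delta, lp.inner_single_left, RCLike.inner_apply', map_one, one_mul]

lemma hasSum_smul_delta (ψ : L2 d) : HasSum (fun n => ψ n • delta n) ψ := by
  convert lp.hasSum_single (p := 2) (by norm_num) ψ using 2 with n
  rw [delta, ← lp.single_smul, smul_eq_mul, mul_one]

lemma fCoeff_sub (e : (Fin d → ℝ) → ℝ) (m n : Γd d) :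
    fCoeff e (m - n) =
      conj (boxCoeff (fun p => e p * Complex.exp (-(Complex.I * (dotZ p m : ℝ)))) n) := by
  rw [boxCoeff, conj_boxMean]
  refine congrArg boxMean (funext fun p => ?_)
  rw [dotZ_sub, Complex.ofReal_sub, mul_sub, sub_eq_add_neg, Complex.exp_add,
    ← conj_exp_I_mul_dotZ p m, ← conj_exp_I_mul_dotZ p n]
  simp only [map_mul, Complex.conj_ofReal, Complex.conj_conj, mul_assoc]

lemma multiplier_boxVec {e : (Fin d → ℝ) → ℝ} (he : Continuous e) {H : L2 d →L[ℂ] L2 d}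
    (hH : IsMultiplier e H) {F G : C(Fin d → ℝ, ℂ)} (hG : ∀ p, G p = e p * F p) :
    H (boxVec F) = boxVec G := by
  ext m
  have hcoord : HasSum (fun n => ⟪delta m, H (boxVec F n • delta n)⟫) ⟪delta m, H (boxVec F)⟫ :=
    ((innerSL ℂ (delta m)).comp H).hasSum (hasSum_smul_delta (boxVec F))
  have hparseval := hasSum_conj_boxCoeff_mul_boxCoeff
    (F := fun p => e p * Complex.exp (-(Complex.I * (dotZ p m : ℝ)))) (by fun_prop) F.continuous
  simp only [map_smul, inner_smul_right, hH m, fCoeff_sub, boxVec_apply, mul_comm (boxCoeff F _)]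
    at hcoord
  rw [← inner_delta_left, hcoord.unique hparseval, boxVec_apply, boxCoeff]
  simp only [← conj_exp_I_mul_dotZ, map_mul, Complex.conj_conj, Complex.conj_ofReal, hG,
    mul_right_comm]

lemma sub_ofReal_ne_zero {z : ℂ} (hz : z.im ≠ 0) (x : ℝ) : z - x ≠ 0 := fun h =>
  hz (by simpa using congrArg Complex.im h)

lemma inner_resolvent_boxVec {e : (Fin d → ℝ) → ℝ} (he : Continuous e) {H : L2 d →L[ℂ] L2 d}
    (hH : IsMultiplier e H) {z : ℂ} (hz : z.im ≠ 0) {R : L2 d →L[ℂ] L2 d}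
    (hR : IsResolventAt H z R) (F G : C(Fin d → ℝ, ℂ)) :
    ⟪boxVec F, R (boxVec G)⟫ = boxMean fun p => conj (F p) * (G p / (z - e p)) := by
  let φ : C(Fin d → ℝ, ℂ) := ⟨fun p => G p / (z - e p),
    G.continuous.div (by fun_prop) fun p => sub_ofReal_ne_zero hz _⟩
  have hφ : (z • (1 : L2 d →L[ℂ] L2 d) - H) (boxVec φ) = boxVec G := by
    have hH' : H (boxVec φ) = boxVec (z • φ - G) := by
      refine multiplier_boxVec he hH fun p => ?_
      have := sub_ofReal_ne_zero hz (e p)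
      simp only [φ, ContinuousMap.sub_apply, ContinuousMap.smul_apply, ContinuousMap.coe_mk,
        smul_eq_mul]
      field_simp
      ring
    rw [sub_apply, smul_apply, one_apply_eq_self, hH', map_sub, map_smul, sub_sub_cancel]
  have hRφ : R (boxVec G) = boxVec φ := by
    rw [← hφ]
    exact DFunLike.congr_fun hR.1 (boxVec φ)
  rw [hRφ]
  exact inner_boxVec_boxVec F φ

end Resolvent

section Derivatives

lemma opNorm_le_sum_norm_apply_single {ι κ G : Type*} [Fintype ι] [Fintype κ] [DecidableEq ι]
    [DecidableEq κ] [NormedAddCommGroup G] [NormedSpace ℝ G]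
    (A : ContinuousMultilinearMap ℝ (fun _ : κ => ι → ℝ) G) :
    ‖A‖ ≤ ∑ k : κ → ι, ‖A fun i => Pi.single (k i) 1‖ := by
  refine A.opNorm_le_bound (by positivity) fun m => ?_
  have hexpand : A m = ∑ k : κ → ι, (∏ i, m i (k i)) • A fun i => Pi.single (k i) 1 := by
    calc A m = A fun i => ∑ l, m i l • Pi.single l (1 : ℝ) := by
          exact congrArg A (funext fun i => pi_eq_sum_univ' (m i))
      _ = _ := by simp_rw [A.map_sum, A.map_smul_univ]
  rw [hexpand, Finset.sum_mul]
  refine norm_sum_le_of_le _ fun k _ => ?_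
  rw [norm_smul, norm_prod, mul_comm]
  gcongr with i
  exact norm_le_pi_norm (m i) (k i)

variable {d : ℕ} {e : (Fin d → ℝ) → ℝ}

lemma norm_iteratedFDeriv_le_of_cmNormLe {m j : ℕ} {C : ℝ} (he : CmNormLe m e C) (hj : j ≤ m)
    (p : Fin d → ℝ) : ‖iteratedFDeriv ℝ j e p‖ ≤ d ^ j * C := by
  refine (opNorm_le_sum_norm_apply_single _).trans ?_
  refine (Finset.sum_le_sum fun k _ => he j hj p k).trans_eq ?_
  simp

lemma Periodic2pi.periodic (he : Periodic2pi e) (j : Fin d) :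
    Function.Periodic e (Pi.single j (2 * π)) := by
  intro p
  convert he p (Pi.single j 1) using 3
  ext i
  rcases eq_or_ne i j with rfl | hij
  · simp
  · simp [hij]

lemma periodic_fderiv {E F : Type*} [NormedAddCommGroup E] [NormedSpace ℝ E]
    [NormedAddCommGroup F] [NormedSpace ℝ F] {f : E → F} {v : E} (hf : Function.Periodic f v) :
    Function.Periodic (fderiv ℝ f) v := fun p => by
  rw [← fderiv_comp_add_right]
  exact congrArg (fderiv ℝ · p) (funext hf)

end Derivatives

section IntegrationByParts

variable {d : ℕ} {j : Fin d}

lemma boxMean_fderiv_single_eq_zero {Q : (Fin d → ℝ) → ℂ} (hQ : ContDiff ℝ 1 Q)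
    (hper : Function.Periodic Q (Pi.single j (2 * π))) :
    boxMean (fun p => fderiv ℝ Q p (Pi.single j 1)) = 0 := by
  obtain _ | n := d
  · exact j.elim0
  have hsum (p : Fin (n + 1) → ℝ) :
      ∑ i, (Pi.single (M := fun _ => (Fin (n + 1) → ℝ) → _) j (fderiv ℝ Q) i p) (Pi.single i 1) =
        fderiv ℝ Q p (Pi.single j 1) := by
    rw [Finset.sum_eq_single j (fun i _ hij => by simp [hij]) (by simp), Pi.single_eq_same]
  have hcont : Continuous fun p => fderiv ℝ Q p (Pi.single j 1) :=
    (hQ.continuous_fderiv one_ne_zero).clm_apply continuous_const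
  have hdiv := integral_divergence_of_hasFDerivAt_off_countable' (fun _ => -π) (fun _ => π)
    (fun _ => by linarith [pi_pos]) (Pi.single j Q) (Pi.single j (fderiv ℝ Q)) ∅
    Set.countable_empty (fun i => ?_) (fun p _ i => ?_) ?_
  · rw [boxMean, torusBox_eq_Icc]
    simp only [hsum] at hdiv
    rw [hdiv, Finset.sum_eq_zero, mul_zero]
    intro i _
    rcases eq_or_ne i j with rfl | hij
    · have hface (x : Fin n → ℝ) : i.insertNth π x =
          (i.insertNth (-π) x : Fin (n + 1) → ℝ) + Pi.single i (2 * π) := by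
        ext l
        refine Fin.succAboveCases i ?_ (fun l => ?_) l
        · simp only [Fin.insertNth_apply_same, Pi.add_apply, Pi.single_eq_same]
          ring
        · simp
      simp only [Pi.single_eq_same, hface, hper _, sub_self]
    · simp [hij]
  · rcases eq_or_ne i j with rfl | hij
    · simpa using hQ.continuous.continuousOn
    · rw [Pi.single_eq_of_ne hij]
      exact continuousOn_const
  · rcases eq_or_ne i j with rfl | hij
    · simpa using (hQ.differentiable one_ne_zero p).hasFDerivAt
    · rw [Pi.single_eq_of_ne hij, Pi.single_eq_of_ne hij]
      exact hasFDerivAt_const (0 : ℂ) p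
  · simpa only [hsum] using hcont.integrableOn_Icc

variable {e : (Fin d → ℝ) → ℝ} {z : ℂ}

lemma sub_ofReal_mem_slitPlane (hz : z.im ≠ 0) (x : ℝ) : z - x ∈ Complex.slitPlane := by
  right
  simpa using hz

lemma hasFDerivAt_log_sub {p : Fin d → ℝ} (he : DifferentiableAt ℝ e p) (hz : z.im ≠ 0) :
    HasFDerivAt (fun p => Complex.log (z - e p))
      ((z - e p)⁻¹ • -Complex.ofRealCLM.comp (fderiv ℝ e p)) p :=
  HasDerivAt.comp_hasFDerivAt (h₂ := Complex.log) (f := fun p => z - e p) p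
    (Complex.hasDerivAt_log (sub_ofReal_mem_slitPlane hz (e p)))
    ((Complex.ofRealCLM.hasFDerivAt.comp p he.hasFDerivAt).const_sub z)

lemma contDiff_log_sub {n : ℕ} (he : ContDiff ℝ n e) (hz : z.im ≠ 0) :
    ContDiff ℝ n fun p => Complex.log (z - e p) :=
  contDiff_iff_contDiffAt.2 fun p =>
    ((Complex.contDiffAt_log (sub_ofReal_mem_slitPlane hz (e p))).restrict_scalars ℝ).fun_comp p
      (contDiffAt_const.sub (Complex.ofRealCLM.contDiff.comp he).contDiffAt)

lemma boxMean_fderiv_mul_div_sub (he : ContDiff ℝ 1 e) (hz : z.im ≠ 0)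
    (heper : Function.Periodic e (Pi.single j (2 * π))) {G : (Fin d → ℝ) → ℂ}
    (hG : ContDiff ℝ 1 G) (hGper : Function.Periodic G (Pi.single j (2 * π))) :
    boxMean (fun p => pd e j p * G p / (z - e p)) =
      boxMean fun p => Complex.log (z - e p) * fderiv ℝ G p (Pi.single j 1) := by
  have hlog : ContDiff ℝ 1 fun p => Complex.log (z - e p) := contDiff_log_sub he hz
  have hzero := boxMean_fderiv_single_eq_zero (hlog.mul hG)
    ((heper.comp fun x : ℝ => Complex.log (z - x)).mul hGper)
  have hde : Continuous fun p => pd e j p :=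
    (he.continuous_fderiv one_ne_zero).clm_apply continuous_const
  have hecont := he.continuous
  have hlhs : Continuous fun p => (pd e j p : ℂ) * G p / (z - e p) :=
    ((Complex.continuous_ofReal.comp hde).mul hG.continuous).div (by fun_prop) fun p =>
      sub_ofReal_ne_zero hz _
  rw [← add_zero (boxMean fun p => pd e j p * G p / (z - e p)), ← hzero, ← boxMean_add hlhs]
  · refine congrArg boxMean (funext fun p => ?_)
    have hprod := (hasFDerivAt_log_sub (he.differentiable one_ne_zero p) hz).fun_mul
      (hG.differentiable one_ne_zero p).hasFDerivAt
    rw [hprod.fderiv]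
    simp only [add_apply, smul_apply, neg_apply, ContinuousLinearMap.comp_apply,
      Complex.ofRealCLM_apply, smul_eq_mul, pd]
    ring
  · exact ((hlog.mul hG).continuous_fderiv one_ne_zero).clm_apply continuous_const

end IntegrationByParts

section LogBound

variable {d : ℕ} {e : (Fin d → ℝ) → ℝ} {M : ℝ}

/-- A `2πℤ^d`-periodic function of class `C³` whose derivatives of order at most `3` have operator
norm at most `M`. -/
structure PeriodicC3Le (e : (Fin d → ℝ) → ℝ) (M : ℝ) : Prop where
  periodic : Periodic2pi e
  contDiff : ContDiff ℝ 3 e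
  norm_iteratedFDeriv_le : ∀ n ≤ 3, ∀ p, ‖iteratedFDeriv ℝ n e p‖ ≤ M

lemma PeriodicC3Le.abs_le (he : PeriodicC3Le e M) (p : Fin d → ℝ) : |e p| ≤ M := by
  simpa using he.norm_iteratedFDeriv_le 0 (by norm_num) p

lemma PeriodicC3Le.nonneg (he : PeriodicC3Le e M) : 0 ≤ M :=
  (abs_nonneg (e 0)).trans (he.abs_le 0)

lemma norm_single_one_le (j : Fin d) : ‖(Pi.single j 1 : Fin d → ℝ)‖ ≤ 1 := by
  rw [Pi.norm_single, norm_one]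

lemma PeriodicC3Le.abs_pd_le (he : PeriodicC3Le e M) (k : Fin d) (p : Fin d → ℝ) :
    |pd e k p| ≤ M := by
  have h := he.norm_iteratedFDeriv_le 1 (by norm_num) p
  rw [norm_iteratedFDeriv_one] at h
  exact ((fderiv ℝ e p).le_of_opNorm_le_of_le h (norm_single_one_le k)).trans_eq (mul_one M)

lemma contDiff_pd {n : ℕ} (he : ContDiff ℝ (n + 1) e) (k : Fin d) : ContDiff ℝ n (pd e k) :=
  (he.fderiv_right le_rfl).clm_apply contDiff_const

lemma periodic_pd {v : Fin d → ℝ} (he : Function.Periodic e v) (k : Fin d) :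
    Function.Periodic (pd e k) v := fun p =>
  congrArg (· (Pi.single k 1)) (periodic_fderiv he p)

lemma hasFDerivAt_ofReal_pd (he : ContDiff ℝ 2 e) (k : Fin d) (p : Fin d → ℝ) :
    HasFDerivAt (fun p => (pd e k p : ℂ)) (Complex.ofRealCLM.comp (fderiv ℝ (pd e k) p)) p :=
  Complex.ofRealCLM.hasFDerivAt.comp p
    ((contDiff_pd (n := 1) he k).differentiable one_ne_zero p).hasFDerivAt

lemma fderiv_pd_apply (he : ContDiff ℝ 2 e) (k : Fin d) (p v : Fin d → ℝ) :
    fderiv ℝ (pd e k) p v = fderiv ℝ (fderiv ℝ e) p v (Pi.single k 1) := by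
  have h := ((he.fderiv_right (m := 1) le_rfl).differentiable one_ne_zero p).hasFDerivAt.clm_apply
    (hasFDerivAt_const (Pi.single k 1) p)
  refine (DFunLike.congr_fun h.fderiv v).trans ?_
  simp

lemma PeriodicC3Le.abs_fderiv_pd_single_le (he : PeriodicC3Le e M) (j k : Fin d) (p : Fin d → ℝ) :
    |fderiv ℝ (pd e k) p (Pi.single j 1)| ≤ M := by
  rw [fderiv_pd_apply (he.contDiff.of_le (by norm_num))]
  have h := (iteratedFDeriv ℝ 2 e p).le_opNorm ![Pi.single j 1, Pi.single k 1]
  simp only [iteratedFDeriv_two_apply, Fin.prod_univ_two, Matrix.cons_val_zero,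
    Matrix.cons_val_one, Pi.norm_single, norm_one, mul_one] at h
  exact h.trans (he.norm_iteratedFDeriv_le 2 (by norm_num) p)

lemma enorm_le_ofReal {E : Type*} [SeminormedAddGroup E] {x : E} {N : ℝ} (h : ‖x‖ ≤ N) :
    ‖x‖ₑ ≤ ENNReal.ofReal N :=
  (ofReal_norm x).symm.trans_le (ENNReal.ofReal_le_ofReal h)

lemma enorm_boxMean_le (F : (Fin d → ℝ) → ℂ) :
    ‖boxMean F‖ₑ ≤ ∫⁻ p in torusBox d, ‖F p‖ₑ := by
  have hvol : ‖((1 / (2 * π) ^ d : ℝ) : ℂ)‖ₑ ≤ 1 := by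
    rw [← ENNReal.ofReal_one]
    refine enorm_le_ofReal ?_
    rw [Complex.norm_of_nonneg (by positivity)]
    exact div_le_one_of_le₀ (one_le_pow₀ (by linarith [pi_gt_three])) (by positivity)
  rw [boxMean, enorm_mul]
  exact (mul_le_mul' hvol (enorm_integral_le_lintegral_enorm _)).trans_eq (one_mul _)

lemma enorm_boxMean_div_sub_le_of_le_norm (he : PeriodicC3Le e M) {z : ℂ} (hz : M + 1 ≤ ‖z‖)
    (j k : Fin d) {H : (Fin d → ℝ) → ℂ} {N : ℝ} (hH : ∀ p, ‖H p‖ ≤ N) :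
    ‖boxMean fun p => pd e j p * (pd e k p * H p) / (z - e p)‖ₑ ≤
      ENNReal.ofReal M * ENNReal.ofReal M * volume (torusBox d) *
        ENNReal.ofReal N := by
  have hpd (i : Fin d) (p : Fin d → ℝ) : ‖(pd e i p : ℂ)‖ₑ ≤ ENNReal.ofReal M :=
    enorm_le_ofReal ((Complex.norm_real _).trans_le (he.abs_pd_le i p))
  have hden (p : Fin d → ℝ) : ‖(z - e p)⁻¹‖ₑ ≤ ENNReal.ofReal 1 := by
    refine enorm_le_ofReal ?_
    rw [norm_inv]
    have := norm_sub_norm_le z (e p)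
    have := (Complex.norm_real _).trans_le (he.abs_le p)
    exact inv_le_one_of_one_le₀ (by linarith)
  calc _ ≤ ∫⁻ p in torusBox d, ‖pd e j p * (pd e k p * H p) / (z - e p)‖ₑ := enorm_boxMean_le _
    _ ≤ ∫⁻ _ in torusBox d, ENNReal.ofReal M * (ENNReal.ofReal M * ENNReal.ofReal N) *
        ENNReal.ofReal 1 := by
        simp only [div_eq_mul_inv, enorm_mul]
        gcongr with p
        exacts [hpd j p, hpd k p, enorm_le_ofReal (hH p), hden p]
    _ = _ := by
        rw [setLIntegral_const, ENNReal.ofReal_one]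
        ring

lemma fderiv_pd_mul_apply (he : ContDiff ℝ 2 e) (k : Fin d) {H : (Fin d → ℝ) → ℂ}
    (hH : Differentiable ℝ H) (p v : Fin d → ℝ) :
    fderiv ℝ (fun p => pd e k p * H p) p v =
      pd e k p * fderiv ℝ H p v + fderiv ℝ (fderiv ℝ e) p v (Pi.single k 1) * H p := by
  rw [((hasFDerivAt_ofReal_pd he k p).fun_mul (hH p).hasFDerivAt).fderiv]
  simp only [add_apply, smul_apply, ContinuousLinearMap.comp_apply, Complex.ofRealCLM_apply,
    smul_eq_mul, fderiv_pd_apply he, mul_comm (H p)]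

lemma enorm_boxMean_div_sub_le_mul (he : ContDiff ℝ 2 e) (heper : Periodic2pi e) {z : ℂ}
    (hz : z.im ≠ 0) (j k : Fin d) {H : (Fin d → ℝ) → ℂ} {N : ℝ} (hH : ContDiff ℝ 1 H)
    (hHper : Function.Periodic H (Pi.single j (2 * π))) (hHN : ∀ p, ‖H p‖ ≤ N)
    (hdHN : ∀ p, ‖fderiv ℝ H p (Pi.single j 1)‖ ≤ N) :
    ‖boxMean fun p => pd e j p * (pd e k p * H p) / (z - e p)‖ₑ ≤
      ((∫⁻ p in Metric.closedBall 0 π,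
          ‖fderiv ℝ e p (Pi.single k 1)‖ₑ * ‖Complex.log (z - e p)‖ₑ) +
        ∫⁻ p in Metric.closedBall 0 π, ‖fderiv ℝ (fderiv ℝ e) p (Pi.single j 1) (Pi.single k 1)‖ₑ *
          ‖Complex.log (z - e p)‖ₑ) * ENNReal.ofReal N := by
  have heper := heper.periodic j
  have hG : ContDiff ℝ 1 fun p => pd e k p * H p :=
    (Complex.ofRealCLM.contDiff.comp (contDiff_pd (n := 1) he k)).mul hH
  have hlog : Measurable fun p => Complex.log (z - e p) :=
    (contDiff_log_sub (n := 2) he hz).continuous.measurable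
  have hreal (x : ℝ) : ‖(x : ℂ)‖ₑ = ‖x‖ₑ := Complex.ofRealLI.enorm_map x
  rw [boxMean_fderiv_mul_div_sub (he.of_le (by norm_num)) hz heper hG
    (((periodic_pd heper k).comp Complex.ofReal).mul hHper),
    ← lintegral_add_left (by fun_prop), ← lintegral_mul_const' _ _ ENNReal.ofReal_ne_top,
    ← torusBox_eq_closedBall]
  simp only [fderiv_pd_mul_apply he k (hH.differentiable one_ne_zero)]
  refine (enorm_boxMean_le _).trans (lintegral_mono fun p => ?_)
  rw [enorm_mul, ← add_mul, mul_comm, mul_right_comm, add_mul]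
  gcongr
  refine (enorm_add_le _ _).trans ?_
  rw [enorm_mul, enorm_mul, hreal, hreal]
  gcongr
  exacts [le_rfl, enorm_le_ofReal (hdHN p), enorm_le_ofReal (hHN p)]

lemma exists_enorm_boxMean_div_sub_le_of_norm_le (hM : 0 < M) (B : ℝ) :
    ∃ c : ℝ≥0∞, c ≠ ⊤ ∧ ∀ (e : (Fin d → ℝ) → ℝ) (z : ℂ) (j k : Fin d) (H : (Fin d → ℝ) → ℂ)
      (N : ℝ), PeriodicC3Le e M → z.im ≠ 0 → ‖z‖ ≤ B → ContDiff ℝ 1 H →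
      Function.Periodic H (Pi.single j (2 * π)) → (∀ p, ‖H p‖ ≤ N) →
      (∀ p, ‖fderiv ℝ H p (Pi.single j 1)‖ ≤ N) →
      ‖boxMean fun p => pd e j p * (pd e k p * H p) / (z - e p)‖ₑ ≤ c * ENNReal.ofReal N := by
  obtain ⟨c₁, hc₁, hlog₁⟩ := exists_setLIntegral_enorm_fderiv_mul_log_le
    (volume : Measure (Fin d → ℝ)) hM (B + M) π
  obtain ⟨c₂, hc₂, hlog₂⟩ := exists_setLIntegral_enorm_fderiv_fderiv_mul_log_le
    (volume : Measure (Fin d → ℝ)) hM (B + M) π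
  refine ⟨c₁ + c₂, by finiteness, fun e z j k H N he hz hzB hH hHper hHN hdHN => ?_⟩
  have he₂ : ContDiff ℝ 2 e := he.contDiff.of_le (by norm_num)
  have hM₂ := he.norm_iteratedFDeriv_le 2 (by norm_num)
  have hB (p : Fin d → ℝ) : ‖z - e p‖ ≤ B + M :=
    norm_sub_le_of_le hzB ((Complex.norm_real _).trans_le (he.abs_le p))
  refine (enorm_boxMean_div_sub_le_mul he₂ he.periodic hz j k hH hHper hHN hdHN).trans ?_
  gcongr
  · exact hlog₁ e z _ he₂ (he.norm_iteratedFDeriv_le 1 (by norm_num)) hM₂ hB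
      (norm_single_one_le k)
  · exact hlog₂ e z _ _ he.contDiff hM₂ (he.norm_iteratedFDeriv_le 3 le_rfl) hB
      (norm_single_one_le j) (norm_single_one_le k)

lemma exists_enorm_boxMean_div_sub_le (hM : 0 < M) :
    ∃ c : ℝ≥0∞, c ≠ ⊤ ∧ ∀ (e : (Fin d → ℝ) → ℝ) (z : ℂ) (j k : Fin d) (H : (Fin d → ℝ) → ℂ)
      (N : ℝ), PeriodicC3Le e M → z.im ≠ 0 → ContDiff ℝ 1 H →
      Function.Periodic H (Pi.single j (2 * π)) → (∀ p, ‖H p‖ ≤ N) →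
      (∀ p, ‖fderiv ℝ H p (Pi.single j 1)‖ ≤ N) →
      ‖boxMean fun p => pd e j p * (pd e k p * H p) / (z - e p)‖ₑ ≤ c * ENNReal.ofReal N := by
  obtain ⟨c, hc, hnear⟩ := exists_enorm_boxMean_div_sub_le_of_norm_le (d := d) hM (M + 1)
  refine ⟨c + ENNReal.ofReal M * ENNReal.ofReal M * volume (torusBox d), ?_,
    fun e z j k H N he hz hH hHper hHN hdHN => ?_⟩
  · have := (isCompact_torusBox d).measure_lt_top (μ := volume)
    finiteness
  rcases le_total ‖z‖ (M + 1) with hzM | hzM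
  · exact (hnear e z j k H N he hz hzM hH hHper hHN hdHN).trans (by gcongr; exact le_self_add)
  · exact (enorm_boxMean_div_sub_le_of_le_norm he hzM j k hHN).trans (by gcongr; exact le_add_self)

end LogBound

section Amplitude

variable {d : ℕ} {e : (Fin d → ℝ) → ℝ} {M : ℝ}

/-- The amplitudes `(i/2·∂_k𝔢(p) + x_k) e^{-i⟨p,x⟩}`, which are the coefficients of the partial
derivatives `∂_k𝔢(p)` in `ĝ_x(p)`. -/
def gvecAmp (e : (Fin d → ℝ) → ℝ) (x : Γd d) (k : Fin d) (p : Fin d → ℝ) : ℂ :=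
  (Complex.I / 2 * pd e k p + x k) * Complex.exp (-(Complex.I * (dotZ p x : ℝ)))

lemma ghat_eq_sum (e : (Fin d → ℝ) → ℝ) (x : Γd d) (p : Fin d → ℝ) :
    ghat e x p = ∑ k, pd e k p * gvecAmp e x k p := by
  simp only [ghat, gvecAmp, gradSq, ← mul_assoc, ← Finset.sum_mul]
  push_cast
  rw [Finset.mul_sum, ← Finset.sum_add_distrib]
  congr 1
  exact Finset.sum_congr rfl fun k _ => by ring

lemma lnorm_nonneg (x : Γd d) : 0 ≤ lnorm x := Real.sqrt_nonneg _

lemma norm_intCast_apply_le_lnorm (x : Γd d) (k : Fin d) : ‖(x k : ℂ)‖ ≤ lnorm x := by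
  rw [Complex.norm_intCast]
  exact Real.abs_le_sqrt
    (Finset.single_le_sum (f := fun i => (x i : ℝ) ^ 2) (fun i _ => sq_nonneg _)
      (Finset.mem_univ k))

lemma norm_exp_neg_I_mul_ofReal (t : ℝ) : ‖Complex.exp (-(Complex.I * t))‖ = 1 := by
  rw [mul_comm, ← neg_mul, ← Complex.ofReal_neg, Complex.norm_exp_ofReal_mul_I]

lemma hasFDerivAt_ofReal_dotZ (x : Γd d) (p : Fin d → ℝ) :
    HasFDerivAt (fun p => (dotZ p x : ℂ)) (Complex.ofRealCLM.comp
      (∑ i, (x i : ℝ) • ContinuousLinearMap.proj (R := ℝ) (φ := fun _ : Fin d => ℝ) i)) p := by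
  refine HasFDerivAt.comp (f := fun p => dotZ p x) p Complex.ofRealCLM.hasFDerivAt
    ((ContinuousLinearMap.hasFDerivAt _).congr_of_eventuallyEq (.of_forall fun q => ?_))
  simp only [dotZ, sum_apply, smul_apply, ContinuousLinearMap.proj_apply, smul_eq_mul, mul_comm]

lemma contDiff_dotZ {n : ℕ} (x : Γd d) : ContDiff ℝ n fun p => dotZ p x := by
  unfold dotZ
  fun_prop

lemma contDiff_gvecAmp {n : ℕ} (he : ContDiff ℝ (n + 1) e) (x : Γd d) (k : Fin d) :
    ContDiff ℝ n (gvecAmp e x k) := by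
  have hpd : ContDiff ℝ n fun p => (pd e k p : ℂ) :=
    Complex.ofRealCLM.contDiff.comp (contDiff_pd he k)
  have hdot : ContDiff ℝ n fun p => (dotZ p x : ℂ) :=
    Complex.ofRealCLM.contDiff.comp (contDiff_dotZ x)
  unfold gvecAmp
  fun_prop

lemma dotZ_add_single (x : Γd d) (j : Fin d) (t : ℝ) (p : Fin d → ℝ) :
    dotZ (p + Pi.single j t) x = dotZ p x + t * x j := by
  simp only [dotZ, Pi.add_apply, add_mul, Finset.sum_add_distrib, Pi.single_apply, ite_mul,
    zero_mul, Finset.sum_ite_eq', Finset.mem_univ, if_true]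

lemma periodic_gvecAmp {j : Fin d} (he : Function.Periodic e (Pi.single j (2 * π))) (x : Γd d)
    (k : Fin d) : Function.Periodic (gvecAmp e x k) (Pi.single j (2 * π)) := fun p => by
  rw [gvecAmp, gvecAmp, periodic_pd he k p, dotZ_add_single]
  congr 1
  exact Complex.exp_eq_exp_iff_exists_int.2 ⟨-x j, by push_cast; ring⟩

lemma norm_I_div_two_mul_le {t : ℝ} (ht : |t| ≤ M) : ‖Complex.I / 2 * t‖ ≤ M / 2 := by
  rw [norm_mul, norm_div, Complex.norm_I, Complex.norm_real, Complex.norm_ofNat, Real.norm_eq_abs]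
  linarith

lemma norm_gvecAmp_le (he : PeriodicC3Le e M) (x : Γd d) (k : Fin d)
    (p : Fin d → ℝ) : ‖gvecAmp e x k p‖ ≤ (M + 1) * (1 + lnorm x) := by
  have hM := he.nonneg
  have hx := lnorm_nonneg x
  rw [gvecAmp, norm_mul, norm_exp_neg_I_mul_ofReal, mul_one]
  refine (norm_add_le_of_le (norm_I_div_two_mul_le (he.abs_pd_le k p))
    (norm_intCast_apply_le_lnorm x k)).trans ?_
  nlinarith

lemma fderiv_gvecAmp_single (he : ContDiff ℝ 2 e) (x : Γd d) (j k : Fin d) (p : Fin d → ℝ) :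
    fderiv ℝ (gvecAmp e x k) p (Pi.single j 1) =
      (Complex.I / 2 * (fderiv ℝ (pd e k) p (Pi.single j 1) : ℝ)) *
          Complex.exp (-(Complex.I * (dotZ p x : ℝ))) -
        Complex.I * x j * gvecAmp e x k p := by
  have h := (((hasFDerivAt_ofReal_pd he k p).const_mul (Complex.I / 2)).add_const (x k : ℂ)).mul
    ((hasFDerivAt_ofReal_dotZ x p).const_mul Complex.I).fun_neg.cexp
  have hx : (∑ i, (x i : ℝ) * (Pi.single j 1 : Fin d → ℝ) i) = x j := by simp [Pi.single_apply]
  refine (DFunLike.congr_fun h.fderiv _).trans ?_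
  simp only [add_apply, smul_apply, neg_apply, ContinuousLinearMap.comp_apply, sum_apply,
    Complex.ofRealCLM_apply, smul_eq_mul, ContinuousLinearMap.proj_apply, hx, gvecAmp]
  push_cast
  ring

lemma norm_fderiv_gvecAmp_single_le (he : PeriodicC3Le e M) (x : Γd d) (j k : Fin d)
    (p : Fin d → ℝ) :
    ‖fderiv ℝ (gvecAmp e x k) p (Pi.single j 1)‖ ≤ (M + 1) * (1 + lnorm x) ^ 2 := by
  have hM := he.nonneg
  have hx := lnorm_nonneg x
  rw [fderiv_gvecAmp_single (he.contDiff.of_le (by norm_num))]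
  calc _ ≤ M / 2 * 1 + 1 * lnorm x * ((M / 2 + lnorm x) * 1) := by
        refine norm_sub_le_of_le ?_ ?_
        · rw [norm_mul, norm_exp_neg_I_mul_ofReal]
          gcongr
          exact norm_I_div_two_mul_le (he.abs_fderiv_pd_single_le j k p)
        · rw [norm_mul, norm_mul, Complex.norm_I, gvecAmp, norm_mul, norm_exp_neg_I_mul_ofReal]
          gcongr
          · exact norm_intCast_apply_le_lnorm x j
          · exact norm_add_le_of_le (norm_I_div_two_mul_le (he.abs_pd_le k p))
              (norm_intCast_apply_le_lnorm x k)
    _ ≤ (M + 1) * (1 + lnorm x) ^ 2 := by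
        nlinarith [mul_nonneg hM hx, mul_nonneg hM (sq_nonneg (lnorm x))]

lemma norm_fderiv_conj_mul_apply_le {E : Type*} [NormedAddCommGroup E] [NormedSpace ℝ E]
    {a b : E → ℂ} {p : E} (ha : DifferentiableAt ℝ a p) (hb : DifferentiableAt ℝ b p) (v : E) :
    ‖fderiv ℝ (fun p => conj (a p) * b p) p v‖ ≤
      ‖a p‖ * ‖fderiv ℝ b p v‖ + ‖b p‖ * ‖fderiv ℝ a p v‖ := by
  have h := (Complex.conjCLE.hasFDerivAt.comp p ha.hasFDerivAt).mul hb.hasFDerivAt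
  rw [show fderiv ℝ (fun p => conj (a p) * b p) p = _ from h.fderiv]
  refine (norm_add_le _ _).trans_eq ?_
  simp

lemma norm_conj_gvecAmp_mul_le (he : PeriodicC3Le e M) (x y : Γd d) (j k : Fin d)
    (p : Fin d → ℝ) : ‖conj (gvecAmp e x j p) * gvecAmp e y k p‖ ≤
      2 * (M + 1) ^ 2 * ((1 + lnorm x) ^ 2 * (1 + lnorm y) ^ 2) := by
  have hM := he.nonneg
  have hx := lnorm_nonneg x
  have hy := lnorm_nonneg y
  rw [norm_mul, Complex.norm_conj]
  calc _ ≤ (M + 1) * (1 + lnorm x) * ((M + 1) * (1 + lnorm y)) := by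
        gcongr
        exacts [norm_gvecAmp_le he x j p, norm_gvecAmp_le he y k p]
    _ = (M + 1) ^ 2 * ((1 + lnorm x) ^ 1 * (1 + lnorm y) ^ 1) := by ring
    _ ≤ 2 * (M + 1) ^ 2 * ((1 + lnorm x) ^ 2 * (1 + lnorm y) ^ 2) := by
        gcongr <;> linarith [sq_nonneg (M + 1)]

lemma norm_fderiv_conj_gvecAmp_mul_le (he : PeriodicC3Le e M) (x y : Γd d)
    (i j k : Fin d) (p : Fin d → ℝ) :
    ‖fderiv ℝ (fun p => conj (gvecAmp e x j p) * gvecAmp e y k p) p (Pi.single i 1)‖ ≤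
      2 * (M + 1) ^ 2 * ((1 + lnorm x) ^ 2 * (1 + lnorm y) ^ 2) := by
  have hM := he.nonneg
  have hx := lnorm_nonneg x
  have hy := lnorm_nonneg y
  have hdiff (x : Γd d) (k : Fin d) : DifferentiableAt ℝ (gvecAmp e x k) p :=
    (contDiff_gvecAmp (n := 2) he.contDiff x k).differentiable two_ne_zero p
  calc _ ≤ (M + 1) * (1 + lnorm x) * ((M + 1) * (1 + lnorm y) ^ 2) +
          (M + 1) * (1 + lnorm y) * ((M + 1) * (1 + lnorm x) ^ 2) := by
        refine (norm_fderiv_conj_mul_apply_le (hdiff x j) (hdiff y k) _).trans ?_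
        gcongr
        exacts [norm_gvecAmp_le he x j p, norm_fderiv_gvecAmp_single_le he y i k p,
          norm_gvecAmp_le he y k p, norm_fderiv_gvecAmp_single_le he x i j p]
    _ = (M + 1) ^ 2 * ((1 + lnorm x) ^ 1 * (1 + lnorm y) ^ 2) +
          (M + 1) ^ 2 * ((1 + lnorm x) ^ 2 * (1 + lnorm y) ^ 1) := by ring
    _ ≤ (M + 1) ^ 2 * ((1 + lnorm x) ^ 2 * (1 + lnorm y) ^ 2) +
          (M + 1) ^ 2 * ((1 + lnorm x) ^ 2 * (1 + lnorm y) ^ 2) := by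
        gcongr <;> linarith
    _ = 2 * (M + 1) ^ 2 * ((1 + lnorm x) ^ 2 * (1 + lnorm y) ^ 2) := by ring

end Amplitude

section GVec

variable {d : ℕ} {M : ℝ}

/-- The summand of index `(j, k)` of the integrand `conj ĝ_x · ĝ_y / (z - 𝔢)`. -/
def gvecIntegrand (e : (Fin d → ℝ) → ℝ) (z : ℂ) (x y : Γd d) (j k : Fin d) (p : Fin d → ℝ) : ℂ :=
  pd e j p * (pd e k p * (conj (gvecAmp e x j p) * gvecAmp e y k p)) / (z - e p)

lemma conj_ghat_mul_ghat_div_sub (e : (Fin d → ℝ) → ℝ) (z : ℂ) (x y : Γd d) (p : Fin d → ℝ) :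
    conj (ghat e x p) * (ghat e y p / (z - e p)) = ∑ j, ∑ k, gvecIntegrand e z x y j k p := by
  simp only [gvecIntegrand, ghat_eq_sum, map_sum, map_mul, Complex.conj_ofReal, Finset.sum_div,
    Finset.sum_mul_sum]
  exact Finset.sum_congr rfl fun j _ => Finset.sum_congr rfl fun k _ => by ring

lemma continuous_gvecIntegrand {e : (Fin d → ℝ) → ℝ} (he : ContDiff ℝ 1 e) {z : ℂ}
    (hz : z.im ≠ 0) (x y : Γd d) (j k : Fin d) : Continuous (gvecIntegrand e z x y j k) := by
  have hpd (k : Fin d) : Continuous fun p => (pd e k p : ℂ) :=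
    Complex.continuous_ofReal.comp (contDiff_pd (n := 0) he k).continuous
  have hamp (x : Γd d) (k : Fin d) : Continuous (gvecAmp e x k) :=
    (contDiff_gvecAmp (n := 0) he x k).continuous
  have hec := he.continuous
  exact Continuous.div (by fun_prop) (by fun_prop) fun p => sub_ofReal_ne_zero hz _

lemma exists_enorm_boxMean_gvecIntegrand_le (hM : 0 < M) :
    ∃ c : ℝ≥0∞, c ≠ ⊤ ∧ ∀ (e : (Fin d → ℝ) → ℝ) (z : ℂ) (x y : Γd d) (j k : Fin d),
      PeriodicC3Le e M → z.im ≠ 0 → ‖boxMean (gvecIntegrand e z x y j k)‖ₑ ≤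
        c * ENNReal.ofReal ((1 + lnorm x) ^ 2 * (1 + lnorm y) ^ 2) := by
  obtain ⟨c, hc, hbound⟩ := exists_enorm_boxMean_div_sub_le (d := d) hM
  refine ⟨c * ENNReal.ofReal (2 * (M + 1) ^ 2), by finiteness, fun e z x y j k he hz => ?_⟩
  rw [mul_assoc, ← ENNReal.ofReal_mul (by positivity)]
  have hamp (x : Γd d) (k : Fin d) : ContDiff ℝ 1 (gvecAmp e x k) :=
    contDiff_gvecAmp (n := 1) (he.contDiff.of_le (by norm_num)) x k
  have hper (x : Γd d) (k : Fin d) := periodic_gvecAmp (he.periodic.periodic j) x k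
  exact hbound e z j k _ _ he hz ((Complex.conjCLE.contDiff.comp (hamp x j)).mul (hamp y k))
    (((hper x j).comp conj).mul (hper y k)) (norm_conj_gvecAmp_mul_le he x y j k)
    (norm_fderiv_conj_gvecAmp_mul_le he x y j j k)

lemma exists_enorm_boxMean_ghat_le (hM : 0 < M) :
    ∃ c : ℝ≥0∞, c ≠ ⊤ ∧ ∀ (e : (Fin d → ℝ) → ℝ) (z : ℂ) (x y : Γd d), PeriodicC3Le e M →
      z.im ≠ 0 → ‖boxMean fun p => conj (ghat e x p) * (ghat e y p / (z - e p))‖ₑ ≤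
        c * ENNReal.ofReal ((1 + lnorm x) ^ 2 * (1 + lnorm y) ^ 2) := by
  obtain ⟨c, hc, hbound⟩ := exists_enorm_boxMean_gvecIntegrand_le (d := d) hM
  refine ⟨d * (d * c), by finiteness, fun e z x y he hz => ?_⟩
  have hcont := continuous_gvecIntegrand (he.contDiff.of_le (by norm_num)) hz x y
  simp only [conj_ghat_mul_ghat_div_sub]
  rw [boxMean_sum _ fun j => continuous_finsetSum _ fun k _ => hcont j k]
  simp only [boxMean_sum _ (hcont _)]
  calc _ ≤ ∑ _ : Fin d, ∑ _ : Fin d, c * ENNReal.ofReal ((1 + lnorm x) ^ 2 * (1 + lnorm y) ^ 2) :=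
        (enorm_sum_le _ _).trans (Finset.sum_le_sum fun j _ =>
          (enorm_sum_le _ _).trans (Finset.sum_le_sum fun k _ => hbound e z x y j k he hz))
    _ = _ := by
        simp only [Finset.sum_const, Finset.card_univ, Fintype.card_fin, nsmul_eq_mul, mul_assoc]

lemma continuous_ghat {e : (Fin d → ℝ) → ℝ} (he : ContDiff ℝ 1 e) (x : Γd d) :
    Continuous (ghat e x) := by
  have hpd (k : Fin d) : Continuous (pd e k) := (contDiff_pd (n := 0) he k).continuous
  unfold ghat gradSq
  fun_prop

lemma IsGVec.eq_boxVec {e : (Fin d → ℝ) → ℝ} (he : ContDiff ℝ 1 e) {g : Γd d → L2 d}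
    (hg : IsGVec e g) (x : Γd d) : g x = boxVec ⟨ghat e x, continuous_ghat he x⟩ :=
  lp.ext (funext fun m => hg x m)

lemma exists_enorm_inner_resolvent_le (hM : 0 < M) :
    ∃ c : ℝ≥0∞, c ≠ ⊤ ∧ ∀ e : (Fin d → ℝ) → ℝ, PeriodicC3Le e M →
      ∀ g : Γd d → L2 d, IsGVec e g → ∀ H : L2 d →L[ℂ] L2 d, IsMultiplier e H →
      ∀ z : ℂ, z.im ≠ 0 → ∀ R : L2 d →L[ℂ] L2 d, IsResolventAt H z R →
      ∀ x y : Γd d, ‖⟪g x, R (g y)⟫‖ₑ ≤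
        c * ENNReal.ofReal ((1 + lnorm x) ^ 2 * (1 + lnorm y) ^ 2) := by
  obtain ⟨c, hc, hbound⟩ := exists_enorm_boxMean_ghat_le (d := d) hM
  refine ⟨c, hc, fun e he g hg H hH z hz R hR x y => ?_⟩
  have he₁ : ContDiff ℝ 1 e := he.contDiff.of_le (by norm_num)
  rw [hg.eq_boxVec he₁ x, hg.eq_boxVec he₁ y, inner_resolvent_boxVec he₁.continuous hH hz hR]
  exact hbound e z x y he hz

end GVec

section OperatorNorm

variable {d : ℕ}

lemma enorm_le_tsum_tsum_enorm_inner_delta (T : L2 d →L[ℂ] L2 d) :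
    ‖T‖ₑ ≤ ∑' x, ∑' y, ‖⟪delta x, T (delta y)⟫‖ₑ := by
  refine T.opENorm_le_bound fun ψ => ?_
  have hcoord (x : Γd d) : ‖(T ψ) x‖ₑ ≤ (∑' y, ‖⟪delta x, T (delta y)⟫‖ₑ) * ‖ψ‖ₑ := by
    have hsum : HasSum (fun y => ⟪delta x, T (ψ y • delta y)⟫) ⟪delta x, T ψ⟫ :=
      ((innerSL ℂ (delta x)).comp T).hasSum (hasSum_smul_delta ψ)
    rw [← inner_delta_left, ← hsum.tsum_eq, ← ENNReal.tsum_mul_right]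
    refine (enorm_tsum_le_tsum_enorm).trans (ENNReal.tsum_le_tsum fun y => ?_)
    rw [map_smul, inner_smul_right, enorm_mul, mul_comm]
    gcongr
    exact enorm_le_iff_norm_le.2 (lp.norm_apply_le_norm two_ne_zero ψ y)
  have hdelta (x : Γd d) : ‖delta x‖ₑ = 1 := by
    rw [← ofReal_norm, delta, lp.norm_single two_pos, norm_one, ENNReal.ofReal_one]
  rw [← ENNReal.tsum_mul_right, ← (hasSum_smul_delta (T ψ)).tsum_eq]
  refine (enorm_tsum_le_tsum_enorm).trans (ENNReal.tsum_le_tsum fun x => ?_)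
  rw [enorm_smul, hdelta, mul_one]
  exact hcoord x

lemma norm_eq_rpow_of_pow_eq {v : ℝ} {w : ℂ} {n : ℕ} (hn : n ≠ 0) (h : w ^ n = v) :
    ‖w‖ = |v| ^ ((1 : ℝ) / n) := by
  have hnorm := congrArg norm h
  rw [norm_pow, Complex.norm_real, Real.norm_eq_abs] at hnorm
  rw [← hnorm, one_div, Real.pow_rpow_inv_natCast (norm_nonneg _) hn]

lemma Phi_mono_right {m n n' : ℕ} (hn : n ≤ n') (V : Γd d → ℝ) : Phi m n V ≤ Phi m n' V := by
  unfold Phi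
  gcongr with x
  linarith [lnorm_nonneg x]

lemma enorm_le_mul_Phi {k : Γd d → Γd d → ℂ} {c : ℝ≥0∞} {n : ℕ}
    (hk : ∀ x y, ‖k x y‖ₑ ≤ c * ENNReal.ofReal ((1 + lnorm x) ^ n * (1 + lnorm y) ^ n))
    {V : Γd d → ℝ} {Vh : Γd d → ℂ} (hV : ∀ x, Vh x ^ 2 = V x) {T : L2 d →L[ℂ] L2 d}
    (hT : ∀ x y, ⟪delta x, T (delta y)⟫ = Vh x * k x y * Vh y) : ‖T‖ₑ ≤ c * Phi 2 n V := by
  let w (x : Γd d) : ℝ≥0∞ := ENNReal.ofReal (|V x| ^ ((1 : ℝ) / (2 : ℕ)) * (1 + lnorm x) ^ n)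
  have hw (x : Γd d) : w x = ‖Vh x‖ₑ * ENNReal.ofReal ((1 + lnorm x) ^ n) := by
    rw [← ofReal_norm, norm_eq_rpow_of_pow_eq two_ne_zero (hV x),
      ← ENNReal.ofReal_mul (by positivity)]
  have hmatrix (x y : Γd d) : ‖⟪delta x, T (delta y)⟫‖ₑ ≤ c * (w x * w y) := by
    have hx := lnorm_nonneg x
    rw [hT, enorm_mul, enorm_mul, hw, hw]
    calc _ ≤ ‖Vh x‖ₑ * (c * ENNReal.ofReal ((1 + lnorm x) ^ n * (1 + lnorm y) ^ n)) * ‖Vh y‖ₑ := by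
          gcongr
          exact hk x y
      _ = _ := by
          rw [ENNReal.ofReal_mul (by positivity)]
          ring
  calc ‖T‖ₑ ≤ ∑' x, ∑' y, c * (w x * w y) := (enorm_le_tsum_tsum_enorm_inner_delta T).trans
        (ENNReal.tsum_le_tsum fun x => ENNReal.tsum_le_tsum (hmatrix x))
    _ = c * (∑' x, w x) ^ 2 := by
        simp only [ENNReal.tsum_mul_left, ENNReal.tsum_mul_right, sq]
    _ = c * Phi 2 n V := rfl

end OperatorNorm

lemma CmNormLe.periodicC3Le {d : ℕ} {e : (Fin d → ℝ) → ℝ} {C : ℝ} (hper : Periodic2pi e)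
    (he : ContDiff ℝ 3 e) (hC : CmNormLe 3 e C) :
    PeriodicC3Le e ((d + 1) ^ 3 * (|C| + 1)) where
  periodic := hper
  contDiff := he
  norm_iteratedFDeriv_le n hn p := by
    calc _ ≤ (d : ℝ) ^ n * C := norm_iteratedFDeriv_le_of_cmNormLe hC hn p
      _ ≤ (d : ℝ) ^ n * (|C| + 1) := by
          gcongr
          linarith [le_abs_self C]
      _ ≤ (d + 1 : ℝ) ^ n * (|C| + 1) := by
          gcongr
          linarith
      _ ≤ (d + 1 : ℝ) ^ 3 * (|C| + 1) := by
          gcongr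
          linarith

theorem statement10_general (d : ℕ) (C : ℝ) :
    ∃ c : ℝ, ∀ e : (Fin d → ℝ) → ℝ, Periodic2pi e → ContDiff ℝ 3 e → CmNormLe 3 e C →
      ∀ g : Γd d → L2 d, IsGVec e g →
      ∀ Hop : L2 d →L[ℂ] L2 d, IsMultiplier e Hop →
      ∀ (V : Γd d → ℝ) (Vh : Γd d → ℂ), (∀ x, Vh x ^ 2 = (V x : ℂ)) →
      ∀ z : ℂ, z.im ≠ 0 → ∀ R : L2 d →L[ℂ] L2 d, IsResolventAt Hop z R →
      ∀ T : L2 d →L[ℂ] L2 d,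
        (∀ x y : Γd d,
          (⟪delta x, T (delta y)⟫ : ℂ) = Vh x * ⟪g x, R (g y)⟫ * Vh y) →
        (‖T‖₊ : ℝ≥0∞) ≤ ENNReal.ofReal c * Phi 2 2 V := by
  obtain ⟨c, hc, hbound⟩ := exists_enorm_inner_resolvent_le (d := d)
    (M := (d + 1) ^ 3 * (|C| + 1)) (by positivity)
  refine ⟨c.toReal, fun e hper he hC g hg Hop hH V Vh hV z hz R hR T hT => ?_⟩
  rw [ENNReal.ofReal_toReal hc]
  exact enorm_le_mul_Phi (hbound e (hC.periodicC3Le hper he) g hg Hop hH z hz R hR) hV hT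

/-- Weighted resolvent estimate
`‖V^{1/2} A (z-h(𝔢))⁻¹ A V^{1/2}‖ ≤ c Φ_{2,3}(V)`, via the vectors `g_x = A δ_x`. -/
theorem statement10 (d : ℕ) (hd : 3 ≤ d) (K C : ℝ) (hK : 0 < K) :
    ∃ c : ℝ, ∀ e : (Fin d → ℝ) → ℝ,
      IsDispersion e → ContDiff ℝ 3 e → IsMorse e → MinCurvGe e K → CmNormLe 3 e C →
      ∀ g : Γd d → L2 d, IsGVec e g →
      ∀ Hop : L2 d →L[ℂ] L2 d, IsMultiplier e Hop →
      ∀ (V : Γd d → ℝ) (Vh : Γd d → ℂ), (∀ x, Vh x ^ 2 = (V x : ℂ)) →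
      ∀ z : ℂ, z.im ≠ 0 → ∀ R : L2 d →L[ℂ] L2 d, IsResolventAt Hop z R →
      ∀ T : L2 d →L[ℂ] L2 d,
        (∀ x y : Γd d,
          (⟪delta x, T (delta y)⟫ : ℂ) = Vh x * ⟪g x, R (g y)⟫ * Vh y) →
        (‖T‖₊ : ℝ≥0∞) ≤ ENNReal.ofReal c * Phi 2 3 V := by
  obtain ⟨c, hc⟩ := statement10_general d C
  exact ⟨c, fun e he hC3 _ _ hCm g hg Hop hH V Vh hV z hz R hR T hT =>
    (hc e he.1 hC3 hCm g hg Hop hH V Vh hV z hz R hR T hT).trans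
      (by gcongr; exact Phi_mono_right (by norm_num) V)⟩

end LatSch
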